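/- Let f, g ∈ S(ℝ^d×ℝ^d, L¹(H,H')) be trace-class-operator-valued Schwartz functions and let f* denote the pointwise Hilbert space adjoint, f*(X) := f(X)* ∈ L¹(H',H). Then f* ♯ g ∈ S(ℝ^d×ℝ^d, L¹(H)) and ∫_{ℝ^d×ℝ^d} tr_H((f* ♯ g)(X)) dX = ∫_{ℝ^d×ℝ^d} tr_H(f(X)* g(X)) dX. -/

import Mathlib

open MeasureTheory Complex SchwartzMap
open scoped Real ENNReal NNReal

set_option maxHeartbeats 1000000
set_option synthInstance.maxHeartbeats 1000000

noncomputable section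

local notation "⟪" x ", " y "⟫_ℝ" => @inner ℝ _ _ x y
local notation "⟪" x ", " y "⟫_ℂ" => @inner ℂ _ _ x y

/-- Euclidean configuration space. -/
abbrev Ed (d : ℕ) : Type := EuclideanSpace ℝ (Fin d)

/-- Line integral of the vector potential `A` along the segment `[x, y]`. -/
def lineInt {d : ℕ} (A : Ed d → Ed d) (x y : Ed d) : ℝ :=
  ∫ s in (0:ℝ)..(1:ℝ), ⟪A (x + s • (y - x)), y - x⟫_ℝ

/-- The phase `e^{-i(y-x)·η} e^{-i(λ/ε)Γ_A(εx,εy)}` of the magnetic Weyl quantization. -/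
def wPhase {d : ℕ} (ε lam : ℝ) (A : Ed d → Ed d) (x y η : Ed d) : ℂ :=
  Complex.exp (-Complex.I * ((⟪y - x, η⟫_ℝ : ℝ) : ℂ)) *
    Complex.exp (-Complex.I * (((lam / ε) * lineInt A (ε • x) (ε • y) : ℝ) : ℂ))

/-- Magnetic Weyl quantization of an operator-valued symbol (absolutely convergent version,
with the momentum integral innermost, suitable for Schwartz-class symbols). -/
def opA {d : ℕ} {H H' : Type*} [NormedAddCommGroup H] [NormedSpace ℂ H]
    [NormedAddCommGroup H'] [NormedSpace ℂ H']
    (ε lam : ℝ) (A : Ed d → Ed d) (f : Ed d × Ed d → (H →L[ℂ] H')) (Ψ : Ed d → H) :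
    Ed d → H' :=
  fun x => (((2 * Real.pi) ^ d)⁻¹ : ℝ) •
    ∫ y : Ed d, ∫ η : Ed d, wPhase ε lam A x y η • f ((ε / 2) • (x + y), η) (Ψ y)

/-- Magnetic Weyl quantization as an (iterated, oscillatory) integral with the momentum
integral outermost; this realizes the oscillatory integral for Hörmander-class symbols. -/
def opW {d : ℕ} {H H' : Type*} [NormedAddCommGroup H] [NormedSpace ℂ H]
    [NormedAddCommGroup H'] [NormedSpace ℂ H']
    (ε lam : ℝ) (A : Ed d → Ed d) (f : Ed d × Ed d → (H →L[ℂ] H')) (Ψ : Ed d → H) :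
    Ed d → H' :=
  fun x => (((2 * Real.pi) ^ d)⁻¹ : ℝ) •
    ∫ η : Ed d, ∫ y : Ed d, wPhase ε lam A x y η • f ((ε / 2) • (x + y), η) (Ψ y)

/-- Directional derivative of a phase-space function. -/
def dirD {d : ℕ} {F : Type*} [NormedAddCommGroup F] [NormedSpace ℝ F]
    (v : Ed d × Ed d) (g : Ed d × Ed d → F) : Ed d × Ed d → F :=
  fun p => fderiv ℝ g p v

/-- Directions corresponding to the multi-indices `a` (position) and `α` (momentum). -/
def mkDirs {d : ℕ} (a α : List (Fin d)) : List (Ed d × Ed d) :=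
  (a.map fun j => ((EuclideanSpace.single j (1:ℝ) : Ed d), (0 : Ed d))) ++
    α.map fun j => ((0 : Ed d), (EuclideanSpace.single j (1:ℝ) : Ed d))

/-- The iterated partial derivative `∂_x^a ∂_ξ^α f`. -/
def mDeriv {d : ℕ} {F : Type*} [NormedAddCommGroup F] [NormedSpace ℝ F]
    (a α : List (Fin d)) (f : Ed d × Ed d → F) : Ed d × Ed d → F :=
  (mkDirs a α).foldr dirD f

/-- The Japanese bracket `⟨ξ⟩ = (1+|ξ|²)^{1/2}`. -/
def jb {d : ℕ} (ξ : Ed d) : ℝ := Real.sqrt (1 + ‖ξ‖ ^ 2)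

/-- Operator-valued Hörmander class `S^m_{ρ,δ}(B(H,H'))`. -/
structure IsHormander {d : ℕ} {H H' : Type*} [NormedAddCommGroup H] [NormedSpace ℂ H]
    [NormedAddCommGroup H'] [NormedSpace ℂ H'] (m ρ δ : ℝ)
    (f : Ed d × Ed d → (H →L[ℂ] H')) : Prop where
  smooth : ContDiff ℝ (⊤ : ℕ∞) f
  bound : ∀ a α : List (Fin d), ∃ C : ℝ, ∀ p : Ed d × Ed d,
    ‖mDeriv a α f p‖ ≤ C * jb p.2 ^ (m - ρ * (α.length : ℝ) + δ * (a.length : ℝ))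

/-- `A` is smooth with polynomially bounded derivatives of all orders. -/
def IsPolyVF {d : ℕ} (A : Ed d → Ed d) : Prop :=
  ContDiff ℝ (⊤ : ℕ∞) A ∧ ∀ n : ℕ, ∃ C : ℝ, ∃ k : ℕ, ∀ x, ‖iteratedFDeriv ℝ n A x‖ ≤ C * (1 + ‖x‖) ^ k

/-- Components `B_{jl} = ∂_j A_l − ∂_l A_j` of the magnetic field `B = dA`. -/
def Bcomp {d : ℕ} (A : Ed d → Ed d) (x : Ed d) (j l : Fin d) : ℝ :=
  fderiv ℝ (fun z => A z l) x (EuclideanSpace.single j (1:ℝ)) -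
    fderiv ℝ (fun z => A z j) x (EuclideanSpace.single l (1:ℝ))

/-- The magnetic field `B = dA` is bounded with bounded derivatives of all orders. -/
def IsBoundedField {d : ℕ} (A : Ed d → Ed d) : Prop :=
  ∀ (j l : Fin d) (n : ℕ), ∃ C : ℝ, ∀ x, ‖iteratedFDeriv ℝ n (fun z => Bcomp A z j l) x‖ ≤ C


/-- The trace norm of a bounded operator between Hilbert spaces, characterized as the
supremum of `∑ |⟨v i, T (e i)⟩|` over finite orthonormal families. -/
def traceNormE {H H' : Type*} [NormedAddCommGroup H] [InnerProductSpace ℂ H]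
    [NormedAddCommGroup H'] [InnerProductSpace ℂ H'] (T : H →L[ℂ] H') : ℝ≥0∞ :=
  ⨆ (n : ℕ) (e : Fin n → H) (v : Fin n → H') (_ : Orthonormal ℂ e) (_ : Orthonormal ℂ v),
    ENNReal.ofReal (∑ i, ‖⟪v i, T (e i)⟫_ℂ‖)

/-- `T` is a trace class operator. -/
def IsTraceClass {H H' : Type*} [NormedAddCommGroup H] [InnerProductSpace ℂ H]
    [NormedAddCommGroup H'] [InnerProductSpace ℂ H'] (T : H →L[ℂ] H') : Prop :=
  traceNormE T < ⊤

/-- The trace of an operator on a Hilbert space (computed in some fixed Hilbert basis;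
for trace class operators this is basis independent). -/
def trH {H : Type*} [NormedAddCommGroup H] [InnerProductSpace ℂ H] [CompleteSpace H]
    (T : H →L[ℂ] H) : ℂ :=
  ∑' i : (exists_hilbertBasis ℂ H).choose,
    ⟪((exists_hilbertBasis ℂ H).choose_spec.choose i : H),
      T ((exists_hilbertBasis ℂ H).choose_spec.choose i)⟫_ℂ

/-- `f` is a Schwartz function with values in the trace class operators `L¹(H,H')`:
all of its derivatives decay, in trace norm, faster than any inverse polynomial. -/
def TCSchwartz {d : ℕ} {H H' : Type*} [NormedAddCommGroup H] [InnerProductSpace ℂ H]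
    [NormedAddCommGroup H'] [InnerProductSpace ℂ H']
    (f : SchwartzMap (Ed d × Ed d) (H →L[ℂ] H')) : Prop :=
  (∀ X : Ed d × Ed d, IsTraceClass (f X)) ∧
    ∀ (k : ℕ) (a α : List (Fin d)), ∃ C : ℝ,
      ∀ X : Ed d × Ed d,
        ENNReal.ofReal ((1 + ‖X‖) ^ k) * traceNormE (mDeriv a α (⇑f) X) ≤ ENNReal.ofReal C

/-!
A trace-class-valued Schwartz function is a Schwartz function with values in the Banach space
`TraceClass H H'`, because trace norm bounds on weak derivatives upgrade them to derivatives in that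
space. The quantization of a symbol `s` has the integral kernel
`(2π)⁻ᵈ θ(x, y) ŝ((ε / 2)(x + y), (y - x) / 2π)`, where `ŝ` is the Fourier transform of `s` in the
momentum variable and the magnetic phase satisfies `θ(x, y) θ(y, x) = 1` and `θ(x, x) = 1`. The map
from symbols to kernels is a bijection of Schwartz spaces, so composition of kernels defines a Weyl
product with respect to any continuous bilinear map, in particular
`(H' →L[ℂ] H) × TraceClass H H' → TraceClass H H`.

On the diagonal the phase disappears, so that `∫ (a ♯ b)` is, up to a constant, the integral over
`x` of the composed kernel at `(x, x)`, that is of `∫ K_a(x, y) K_b(y, x) dy`. The phases of the two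
factors cancel again, and by Plancherel's theorem this double integral is the same constant times
`∫ a b`. The trace is continuous on `TraceClass H H` and commutes with the integrals.
-/

section OrthonormalFamilies

variable {ι E F : Type*} [NormedAddCommGroup E] [InnerProductSpace ℂ E]
  [NormedAddCommGroup F] [InnerProductSpace ℂ F]

theorem exists_norm_eq_one_conj_mul_eq_norm (z : ℂ) :
    ∃ c : ℂ, ‖c‖ = 1 ∧ starRingEnd ℂ c * z = ‖z‖ := by
  rcases eq_or_ne z 0 with rfl | hz
  · exact ⟨1, by simp, by simp⟩
  · have hz' : (‖z‖ : ℂ) ≠ 0 := by simpa using hz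
    refine ⟨z / ‖z‖, by simp [hz], ?_⟩
    rw [map_div₀, Complex.conj_ofReal, div_mul_eq_mul_div, Complex.conj_mul', sq,
      mul_div_cancel_right₀ _ hz']

theorem exists_orthonormal_inner_eq_norm {v : ι → E} (hv : Orthonormal ℂ v) (x : ι → E) :
    ∃ v' : ι → E, Orthonormal ℂ v' ∧ ∀ i, ⟪v' i, x i⟫_ℂ = ‖⟪v i, x i⟫_ℂ‖ := by
  choose c hc hcx using fun i => exists_norm_eq_one_conj_mul_eq_norm ⟪v i, x i⟫_ℂ
  refine ⟨fun i => c i • v i, ⟨fun i => ?_, fun i j hij => ?_⟩, fun i => ?_⟩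
  · rw [norm_smul, hc, hv.1, one_mul]
  · beta_reduce
    rw [inner_smul_left, inner_smul_right, hv.2 hij, mul_zero, mul_zero]
  · rw [inner_smul_left, hcx]

variable [Fintype ι]

theorem exists_linearIsometry_apply_basisFun {e : ι → E} (he : Orthonormal ℂ e) :
    ∃ U : EuclideanSpace ℂ ι →ₗᵢ[ℂ] E, ∀ i, U (EuclideanSpace.basisFun ι ℂ i) = e i := by
  let b := (EuclideanSpace.basisFun ι ℂ).toBasis
  have hbe : b.constr ℂ e ∘ b = e := funext (b.constr_basis ℂ e)
  have hb : Orthonormal ℂ b := by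
    simpa only [b, OrthonormalBasis.coe_toBasis] using (EuclideanSpace.basisFun ι ℂ).orthonormal
  exact ⟨(b.constr ℂ e).isometryOfOrthonormal hb (hbe.symm ▸ he), fun i => congrFun hbe i⟩

variable [FiniteDimensional ℂ E] [CompleteSpace F]

theorem exists_orthonormalBasis_pairwise_inner_eq_zero (N : E →L[ℂ] F) :
    ∃ w : OrthonormalBasis (Fin (Module.finrank ℂ E)) ℂ E,
      Pairwise fun k l => ⟪N (w k), N (w l)⟫_ℂ = 0 := by
  have : CompleteSpace E := FiniteDimensional.complete ℂ E
  let M : E →L[ℂ] E := N.adjoint.comp N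
  have hM : (M : E →ₗ[ℂ] E).IsSymmetric := fun x y => by
    simp [M, ContinuousLinearMap.adjoint_inner_left, ContinuousLinearMap.adjoint_inner_right]
  refine ⟨hM.eigenvectorBasis rfl, fun k l hkl => ?_⟩
  have hl : M (hM.eigenvectorBasis rfl l) = _ := hM.apply_eigenvectorBasis rfl l
  beta_reduce
  rw [← ContinuousLinearMap.adjoint_inner_right, ← ContinuousLinearMap.comp_apply, hl,
    inner_smul_right, (hM.eigenvectorBasis rfl).orthonormal.2 hkl, mul_zero]

theorem sum_inner_apply_eq_sum_inner_apply {κ : Type*} [Fintype κ] (N P : E →L[ℂ] F)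
    (b : OrthonormalBasis ι ℂ E) (w : OrthonormalBasis κ ℂ E) :
    ∑ i, ⟪N (b i), P (b i)⟫_ℂ = ∑ k, ⟪N (w k), P (w k)⟫_ℂ := by
  have : CompleteSpace E := FiniteDimensional.complete ℂ E
  simp only [← ContinuousLinearMap.adjoint_inner_right N]
  exact (LinearMap.trace_eq_sum_inner (N.adjoint.comp P : E →ₗ[ℂ] E) b).symm.trans
    (LinearMap.trace_eq_sum_inner (N.adjoint.comp P : E →ₗ[ℂ] E) w)

end OrthonormalFamilies

section TraceNorm

variable {H H' : Type*} [NormedAddCommGroup H] [InnerProductSpace ℂ H]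
  [NormedAddCommGroup H'] [InnerProductSpace ℂ H']

theorem ofReal_sum_norm_inner_le_traceNormE (T : H →L[ℂ] H') {ι : Type*} [Fintype ι] {e : ι → H}
    {v : ι → H'} (he : Orthonormal ℂ e) (hv : Orthonormal ℂ v) :
    ENNReal.ofReal (∑ i, ‖⟪v i, T (e i)⟫_ℂ‖) ≤ traceNormE T := by
  let σ := (Fintype.equivFin ι).symm
  rw [← σ.sum_comp fun i => ‖⟪v i, T (e i)⟫_ℂ‖]
  exact le_iSup_of_le (Fintype.card ι) (le_iSup_of_le (e ∘ σ) (le_iSup_of_le (v ∘ σ)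
    (le_iSup_of_le (he.comp _ σ.injective) (le_iSup_of_le (hv.comp _ σ.injective) le_rfl))))

theorem traceNormE_le {T : H →L[ℂ] H'} {C : ℝ≥0∞}
    (h : ∀ (n : ℕ) (e : Fin n → H) (v : Fin n → H'), Orthonormal ℂ e → Orthonormal ℂ v →
      ENNReal.ofReal (∑ i, ‖⟪v i, T (e i)⟫_ℂ‖) ≤ C) : traceNormE T ≤ C :=
  iSup_le fun n => iSup_le fun e => iSup_le fun v => iSup_le fun he => iSup_le fun hv =>
    h n e v he hv

-- Rotating the phase of each `v i` makes all summands nonnegative.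
theorem traceNormE_le_of_norm_sum_inner_le {T : H →L[ℂ] H'} {C : ℝ}
    (h : ∀ (n : ℕ) (e : Fin n → H) (v : Fin n → H'), Orthonormal ℂ e → Orthonormal ℂ v →
      ‖∑ i, ⟪v i, T (e i)⟫_ℂ‖ ≤ C) : traceNormE T ≤ ENNReal.ofReal C := by
  refine traceNormE_le fun n e v he hv => ENNReal.ofReal_le_ofReal ?_
  obtain ⟨v', hv', hv'T⟩ := exists_orthonormal_inner_eq_norm hv fun i => T (e i)
  have hsum := h n e v' he hv'
  simp only [hv'T, ← Complex.ofReal_sum] at hsum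
  rwa [Complex.norm_of_nonneg (Finset.sum_nonneg fun i _ => norm_nonneg _)] at hsum

theorem traceNormE_zero : traceNormE (0 : H →L[ℂ] H') = 0 :=
  le_antisymm (traceNormE_le fun n e v _ _ => by simp) bot_le

theorem traceNormE_add_le (S T : H →L[ℂ] H') :
    traceNormE (S + T) ≤ traceNormE S + traceNormE T := by
  refine traceNormE_le fun n e v he hv => ?_
  refine le_trans ?_ (add_le_add (ofReal_sum_norm_inner_le_traceNormE S he hv)
    (ofReal_sum_norm_inner_le_traceNormE T he hv))
  rw [← ENNReal.ofReal_add (by positivity) (by positivity), ← Finset.sum_add_distrib]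
  refine ENNReal.ofReal_le_ofReal (Finset.sum_le_sum fun i _ => ?_)
  rw [add_apply, inner_add_right]
  exact norm_add_le _ _

theorem traceNormE_smul_le (c : ℂ) (T : H →L[ℂ] H') :
    traceNormE (c • T) ≤ ENNReal.ofReal ‖c‖ * traceNormE T := by
  refine traceNormE_le fun n e v he hv => ?_
  refine le_trans (le_of_eq ?_) (mul_le_mul_right (ofReal_sum_norm_inner_le_traceNormE T he hv) _)
  simp only [← ENNReal.ofReal_mul (norm_nonneg c), Finset.mul_sum, smul_apply, inner_smul_right,
    norm_mul]

theorem ofReal_norm_inner_le_traceNormE (T : H →L[ℂ] H') {x : H} {y : H'} (hx : ‖x‖ = 1)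
    (hy : ‖y‖ = 1) : ENNReal.ofReal ‖⟪y, T x⟫_ℂ‖ ≤ traceNormE T := by
  have hx' : Orthonormal ℂ fun _ : Unit => x :=
    ⟨fun _ => hx, fun _ _ hij => absurd rfl hij⟩
  have hy' : Orthonormal ℂ fun _ : Unit => y :=
    ⟨fun _ => hy, fun _ _ hij => absurd rfl hij⟩
  simpa using ofReal_sum_norm_inner_le_traceNormE T hx' hy'

theorem ofReal_norm_le_traceNormE (T : H →L[ℂ] H') : ENNReal.ofReal ‖T‖ ≤ traceNormE T := by
  by_cases hT : traceNormE T = ⊤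
  · exact hT ▸ le_top
  rw [ENNReal.ofReal_le_iff_le_toReal hT]
  refine T.opNorm_le_bound ENNReal.toReal_nonneg fun x => ?_
  rcases eq_or_ne (T x) 0 with hTx | hTx
  · rw [hTx, norm_zero]
    positivity
  have hx : x ≠ 0 := fun h => hTx (by rw [h, map_zero])
  have h := ofReal_norm_inner_le_traceNormE T (norm_smul_inv_norm (𝕜 := ℂ) hx)
    (norm_smul_inv_norm (𝕜 := ℂ) hTx)
  have hquot : ‖⟪((‖T x‖ : ℂ)⁻¹) • T x, T (((‖x‖ : ℂ)⁻¹) • x)⟫_ℂ‖ = ‖T x‖ / ‖x‖ := by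
    have hTx' : ‖T x‖ ≠ 0 := norm_ne_zero_iff.2 hTx
    rw [map_smul, inner_smul_left, inner_smul_right, inner_self_eq_norm_sq_to_K]
    simp only [norm_mul, norm_pow, RCLike.norm_conj, norm_inv, Complex.norm_real, norm_norm,
      Complex.coe_algebraMap]
    field_simp
  rw [ENNReal.ofReal_le_iff_le_toReal hT] at h
  rwa [← div_le_iff₀ (norm_pos_iff.2 hx), ← hquot]

theorem IsTraceClass.add {S T : H →L[ℂ] H'} (hS : IsTraceClass S) (hT : IsTraceClass T) :
    IsTraceClass (S + T) :=
  (traceNormE_add_le S T).trans_lt (ENNReal.add_lt_top.2 ⟨hS, hT⟩)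

theorem IsTraceClass.smul (c : ℂ) {T : H →L[ℂ] H'} (hT : IsTraceClass T) :
    IsTraceClass (c • T) :=
  (traceNormE_smul_le c T).trans_lt (ENNReal.mul_lt_top ENNReal.ofReal_lt_top hT)

theorem isTraceClass_zero : IsTraceClass (0 : H →L[ℂ] H') :=
  traceNormE_zero.trans_lt ENNReal.zero_lt_top

end TraceNorm

section TraceClassSpace

variable (H H' : Type*) [NormedAddCommGroup H] [InnerProductSpace ℂ H]
  [NormedAddCommGroup H'] [InnerProductSpace ℂ H']

/-- The trace class operators as a subspace of the bounded operators. -/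
def traceClassSubmodule : Submodule ℂ (H →L[ℂ] H') where
  carrier := {T | IsTraceClass T}
  add_mem' hS hT := hS.add hT
  zero_mem' := isTraceClass_zero
  smul_mem' c _ hT := hT.smul c

/-- The space `L¹(H, H')` of trace class operators. It is a structure of its own, rather than the
subspace `traceClassSubmodule`, so that it can carry the trace norm instead of the operator norm. -/
@[ext]
structure TraceClass where
  /-- The underlying bounded operator. -/
  val : H →L[ℂ] H'
  isTraceClass : IsTraceClass val

variable {H H'}

namespace TraceClass

/-- The identification with `traceClassSubmodule` along which the vector space structure is
transported. -/
def equivSubmodule : TraceClass H H' ≃ traceClassSubmodule H H' where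
  toFun T := ⟨T.val, T.isTraceClass⟩
  invFun T := ⟨T.1, T.2⟩

instance : AddCommGroup (TraceClass H H') := equivSubmodule.addCommGroup

instance : Module ℂ (TraceClass H H') := equivSubmodule.module ℂ

instance : Norm (TraceClass H H') := ⟨fun T => (traceNormE T.val).toReal⟩

theorem ofReal_norm (T : TraceClass H H') : ENNReal.ofReal ‖T‖ = traceNormE T.val :=
  ENNReal.ofReal_toReal T.isTraceClass.ne

theorem norm_le_iff {T : TraceClass H H'} {C : ℝ} (hC : 0 ≤ C) :
    ‖T‖ ≤ C ↔ traceNormE T.val ≤ ENNReal.ofReal C := by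
  rw [← ofReal_norm, ENNReal.ofReal_le_ofReal_iff hC]

theorem traceNorm_nonneg (T : TraceClass H H') : 0 ≤ ‖T‖ := ENNReal.toReal_nonneg

theorem opNorm_le_norm (T : TraceClass H H') : ‖T.val‖ ≤ ‖T‖ := by
  have h := ofReal_norm_le_traceNormE T.val
  rwa [← ofReal_norm, ENNReal.ofReal_le_ofReal_iff T.traceNorm_nonneg] at h

theorem norm_smul_le (c : ℂ) (T : TraceClass H H') : ‖c • T‖ ≤ ‖c‖ * ‖T‖ := by
  rw [norm_le_iff (mul_nonneg (norm_nonneg _) T.traceNorm_nonneg),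
    ENNReal.ofReal_mul (norm_nonneg _), ofReal_norm]
  exact traceNormE_smul_le c T.val

theorem normedSpaceCore : NormedSpace.Core ℂ (TraceClass H H') where
  norm_nonneg := traceNorm_nonneg
  norm_smul c T := by
    refine le_antisymm (norm_smul_le c T) ?_
    rcases eq_or_ne c 0 with rfl | hc
    · rw [norm_zero, zero_mul]
      exact traceNorm_nonneg _
    · have h := norm_smul_le c⁻¹ (c • T)
      rwa [inv_smul_smul₀ hc, norm_inv, le_inv_mul_iff₀ (norm_pos_iff.2 hc)] at h
  norm_triangle S T := by
    rw [norm_le_iff (add_nonneg S.traceNorm_nonneg T.traceNorm_nonneg),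
      ENNReal.ofReal_add S.traceNorm_nonneg T.traceNorm_nonneg, ofReal_norm, ofReal_norm]
    exact traceNormE_add_le S.val T.val
  norm_eq_zero_iff T := by
    constructor
    · exact fun h => TraceClass.ext (norm_le_zero_iff.1 ((opNorm_le_norm T).trans_eq h))
    · rintro rfl
      exact congrArg ENNReal.toReal traceNormE_zero

instance : NormedAddCommGroup (TraceClass H H') := NormedAddCommGroup.ofCore normedSpaceCore

instance : NormedSpace ℂ (TraceClass H H') := NormedSpace.ofCore normedSpaceCore

/-- The continuous inclusion of the trace class operators into the bounded operators. -/
def toCLM : TraceClass H H' →L[ℂ] H →L[ℂ] H' :=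
  LinearMap.mkContinuous
    { toFun T := T.val
      map_add' _ _ := rfl
      map_smul' _ _ := rfl } 1 fun T => by
    rw [one_mul]
    exact opNorm_le_norm T

theorem toCLM_apply (T : TraceClass H H') : toCLM T = T.val := rfl

theorem sum_norm_inner_le (T : TraceClass H H') {ι : Type*} [Fintype ι] {e : ι → H} {v : ι → H'}
    (he : Orthonormal ℂ e) (hv : Orthonormal ℂ v) : ∑ i, ‖⟪v i, T.val (e i)⟫_ℂ‖ ≤ ‖T‖ := by
  have h := ofReal_sum_norm_inner_le_traceNormE T.val he hv
  rwa [← ofReal_norm, ENNReal.ofReal_le_ofReal_iff (norm_nonneg _)] at h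

theorem norm_le_of_norm_sum_inner_le {T : TraceClass H H'} {C : ℝ} (hC : 0 ≤ C)
    (h : ∀ (n : ℕ) (e : Fin n → H) (v : Fin n → H'), Orthonormal ℂ e → Orthonormal ℂ v →
      ‖∑ i, ⟪v i, T.val (e i)⟫_ℂ‖ ≤ C) : ‖T‖ ≤ C :=
  (norm_le_iff hC).2 (traceNormE_le_of_norm_sum_inner_le h)

theorem traceNormE_le_of_tendsto {T : ℕ → H →L[ℂ] H'} {S : H →L[ℂ] H'} {C : ℝ≥0∞}
    (hT : Filter.Tendsto T Filter.atTop (nhds S))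
    (hC : ∀ᶠ n in Filter.atTop, traceNormE (T n) ≤ C) :
    traceNormE S ≤ C := by
  refine traceNormE_le fun n e v he hv => ?_
  have hlim : Filter.Tendsto (fun m => ENNReal.ofReal (∑ i, ‖⟪v i, T m (e i)⟫_ℂ‖)) Filter.atTop
      (nhds (ENNReal.ofReal (∑ i, ‖⟪v i, S (e i)⟫_ℂ‖))) :=
    ENNReal.tendsto_ofReal (tendsto_finsetSum _ fun i _ =>
      (tendsto_const_nhds.inner (((ContinuousLinearMap.apply ℂ H' (e i)).continuous.tendsto S).comp
        hT)).norm)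
  exact le_of_tendsto hlim
    (hC.mono fun m hm => (ofReal_sum_norm_inner_le_traceNormE _ he hv).trans hm)

instance [CompleteSpace H'] : CompleteSpace (TraceClass H H') := by
  refine Metric.complete_of_cauchySeq_tendsto fun u hu => ?_
  obtain ⟨T, hT⟩ := cauchySeq_tendsto_of_complete (toCLM.uniformContinuous.comp_cauchySeq hu)
  replace hT : Filter.Tendsto (fun n => (u n).val) Filter.atTop (nhds T) := hT
  have hdiff (δ : ℝ) (hδ : 0 < δ) :
      ∃ N, ∀ n ≥ N, traceNormE ((u n).val - T) ≤ ENNReal.ofReal δ := by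
    obtain ⟨N, hN⟩ := Metric.cauchySeq_iff.1 hu δ hδ
    refine ⟨N, fun n hn => traceNormE_le_of_tendsto (T := fun m => (u n - u m).val)
      (tendsto_const_nhds.sub hT) (Filter.eventually_atTop.2 ⟨N, fun m hm => ?_⟩)⟩
    rw [← norm_le_iff hδ.le, ← dist_eq_norm]
    exact (hN n hn m hm).le
  have hTtrace : IsTraceClass T := by
    obtain ⟨N, hN⟩ := hdiff 1 one_pos
    have h : IsTraceClass ((u N).val - T) := (hN N le_rfl).trans_lt ENNReal.ofReal_lt_top
    simpa using (u N).isTraceClass.add (h.smul (-1))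
  refine ⟨⟨T, hTtrace⟩, Metric.tendsto_atTop.2 fun δ hδ => ?_⟩
  obtain ⟨N, hN⟩ := hdiff (δ / 2) (half_pos hδ)
  refine ⟨N, fun n hn => ((dist_eq_norm _ _).trans_le ?_).trans_lt (half_lt_self hδ)⟩
  exact (norm_le_iff (half_pos hδ).le).2 (hN n hn)

end TraceClass

end TraceClassSpace

section TraceIdeal

variable {H H' H'' : Type*} [NormedAddCommGroup H] [InnerProductSpace ℂ H]
  [NormedAddCommGroup H'] [InnerProductSpace ℂ H'] [NormedAddCommGroup H'']
  [InnerProductSpace ℂ H'']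

namespace TraceClass

theorem sum_norm_inner_le_mul_norm (T : TraceClass H H') {ι : Type*} [Fintype ι] {e : ι → H}
    {y : ι → H'} {C : ℝ} (he : Orthonormal ℂ e) (hy : Pairwise fun i j => ⟪y i, y j⟫_ℂ = 0)
    (hC : 0 ≤ C) (hyC : ∀ i, ‖y i‖ ≤ C) : ∑ i, ‖⟪y i, T.val (e i)⟫_ℂ‖ ≤ C * ‖T‖ := by
  classical
  let v (i : {i // y i ≠ 0}) : H' := (‖y i‖ : ℂ)⁻¹ • y i
  have hv : Orthonormal ℂ v := by
    refine ⟨fun i => norm_smul_inv_norm (𝕜 := ℂ) i.2, fun i j hij => ?_⟩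
    simp only [v]
    rw [inner_smul_left, inner_smul_right, hy (Subtype.coe_ne_coe.2 hij), mul_zero, mul_zero]
  have hterm (i : {i // y i ≠ 0}) :
      ‖⟪y i, T.val (e i)⟫_ℂ‖ ≤ C * ‖⟪v i, T.val (e i)⟫_ℂ‖ := by
    have hyv : y i = (‖y i‖ : ℂ) • v i :=
      (smul_inv_smul₀ (by simpa using i.2) _).symm
    nth_rw 1 [hyv]
    rw [inner_smul_left, norm_mul, RCLike.norm_conj, Complex.norm_real, norm_norm]
    gcongr
    exact hyC i
  calc ∑ i, ‖⟪y i, T.val (e i)⟫_ℂ‖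
      = ∑ i : {i // y i ≠ 0}, ‖⟪y i, T.val (e i)⟫_ℂ‖ := by
        rw [← Finset.sum_subtype (Finset.univ.filter fun i => y i ≠ 0) (by simp)
          fun i => ‖⟪y i, T.val (e i)⟫_ℂ‖, Finset.sum_filter_of_ne]
        intro i _ hi h0
        exact hi (by rw [h0, inner_zero_left, norm_zero])
    _ ≤ ∑ i, C * ‖⟪v i, T.val (e i)⟫_ℂ‖ := Finset.sum_le_sum fun i _ => hterm i
    _ = C * ∑ i, ‖⟪v i, T.val (e i)⟫_ℂ‖ := (Finset.mul_sum _ _ _).symm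
    _ ≤ C * ‖T‖ := by
        gcongr
        exact T.sum_norm_inner_le (he.comp _ Subtype.val_injective) hv

variable [CompleteSpace H'] [CompleteSpace H'']

-- With `N c = S* ∑ cᵢ vᵢ` and `P c = T ∑ cᵢ eᵢ`, the sum is the trace of `N* P` on `ℂⁿ`; it is
-- evaluated in an orthonormal basis whose image under `N` is orthogonal.
theorem norm_sum_inner_comp_le (S : H' →L[ℂ] H'') (T : TraceClass H H') {ι : Type*} [Fintype ι]
    {e : ι → H} {v : ι → H''} (he : Orthonormal ℂ e) (hv : Orthonormal ℂ v) :
    ‖∑ i, ⟪v i, S (T.val (e i))⟫_ℂ‖ ≤ ‖S‖ * ‖T‖ := by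
  obtain ⟨U, hU⟩ := exists_linearIsometry_apply_basisFun he
  obtain ⟨V, hV⟩ := exists_linearIsometry_apply_basisFun hv
  let N : EuclideanSpace ℂ ι →L[ℂ] H' := S.adjoint.comp V.toContinuousLinearMap
  have hN (c : EuclideanSpace ℂ ι) : ‖N c‖ ≤ ‖S‖ * ‖c‖ := by
    have h := S.adjoint.le_opNorm (V c)
    rwa [LinearIsometryEquiv.norm_map, V.norm_map] at h
  obtain ⟨w, hw⟩ := exists_orthonormalBasis_pairwise_inner_eq_zero N
  have hbasis : ∑ i, ⟪v i, S (T.val (e i))⟫_ℂ = ∑ k, ⟪N (w k), T.val (U (w k))⟫_ℂ := by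
    refine Eq.trans ?_ (sum_inner_apply_eq_sum_inner_apply N (T.val.comp U.toContinuousLinearMap)
      (EuclideanSpace.basisFun ι ℂ) w)
    refine Finset.sum_congr rfl fun i _ => ?_
    simp only [N, ContinuousLinearMap.comp_apply, LinearIsometry.coe_toContinuousLinearMap, hU, hV,
      ContinuousLinearMap.adjoint_inner_left]
  rw [hbasis]
  refine (norm_sum_le _ _).trans (T.sum_norm_inner_le_mul_norm
    (w.orthonormal.comp_linearIsometry U) hw (norm_nonneg S) fun k => ?_)
  simpa [w.orthonormal.1 k] using hN (w k)

theorem isTraceClass_comp (S : H' →L[ℂ] H'') (T : TraceClass H H') : IsTraceClass (S.comp T.val) :=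
  (traceNormE_le_of_norm_sum_inner_le fun _ _ _ he hv =>
    norm_sum_inner_comp_le S T he hv).trans_lt ENNReal.ofReal_lt_top

/-- Composition of a bounded operator with a trace class operator, as a bilinear map into the trace
class operators. -/
def compL : (H' →L[ℂ] H'') →L[ℂ] TraceClass H H' →L[ℂ] TraceClass H H'' :=
  LinearMap.mkContinuous₂
    (LinearMap.mk₂ ℂ (fun S T => (⟨S.comp T.val, isTraceClass_comp S T⟩ : TraceClass H H''))
      (fun _ _ _ => TraceClass.ext (ContinuousLinearMap.add_comp _ _ _))
      (fun _ _ _ => TraceClass.ext (ContinuousLinearMap.smul_comp _ _ _))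
      (fun _ _ _ => TraceClass.ext (ContinuousLinearMap.comp_add _ _ _))
      (fun _ _ _ => TraceClass.ext (ContinuousLinearMap.comp_smul _ _ _)))
    1 fun S T => by
      rw [one_mul]
      exact norm_le_of_norm_sum_inner_le (by positivity) fun _ _ _ he hv =>
        norm_sum_inner_comp_le S T he hv

theorem toCLM_compL (S : H' →L[ℂ] H'') (T : TraceClass H H') :
    toCLM (compL S T) = S.comp (toCLM T) := rfl

end TraceClass

end TraceIdeal

section Trace

variable {H : Type*} [NormedAddCommGroup H] [InnerProductSpace ℂ H]

namespace TraceClass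

theorem sum_norm_inner_hilbertBasis_le (T : TraceClass H H) {ι : Type*} (b : HilbertBasis ι ℂ H)
    (s : Finset ι) : ∑ i ∈ s, ‖⟪b i, T.val (b i)⟫_ℂ‖ ≤ ‖T‖ := by
  rw [← Finset.sum_coe_sort]
  exact T.sum_norm_inner_le (b.orthonormal.comp _ Subtype.val_injective)
    (b.orthonormal.comp _ Subtype.val_injective)

theorem summable_norm_inner (T : TraceClass H H) {ι : Type*} (b : HilbertBasis ι ℂ H) :
    Summable fun i => ‖⟪b i, T.val (b i)⟫_ℂ‖ :=
  summable_of_sum_le (fun _ => norm_nonneg _) (T.sum_norm_inner_hilbertBasis_le b)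

variable [CompleteSpace H]

/-- The trace as a continuous linear functional on the trace class operators. -/
def trace : TraceClass H H →L[ℂ] ℂ :=
  LinearMap.mkContinuous
    { toFun T := trH T.val
      map_add' S T := by
        have hS := (S.summable_norm_inner (exists_hilbertBasis ℂ H).choose_spec.choose).of_norm
        have hT := (T.summable_norm_inner (exists_hilbertBasis ℂ H).choose_spec.choose).of_norm
        refine Eq.trans (tsum_congr fun i => ?_) (hS.tsum_add hT)
        exact inner_add_right _ _ _
      map_smul' c T := by
        refine Eq.trans (tsum_congr fun i => ?_) tsum_mul_left
        exact inner_smul_right _ _ _ } 1 fun T => by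
    rw [one_mul]
    exact (norm_tsum_le_tsum_norm (T.summable_norm_inner _)).trans
      (Real.tsum_le_of_sum_le (fun _ => norm_nonneg _) (T.sum_norm_inner_hilbertBasis_le _))

theorem trace_apply (T : TraceClass H H) : trace T = trH (toCLM T) := rfl

end TraceClass

end Trace

section DerivClosed

variable {W F ι : Type*} [NormedAddCommGroup W] [NormedSpace ℝ W]
  [NormedAddCommGroup F] [NormedSpace ℝ F]

/-- A class of functions on a finite-dimensional space which consists of differentiable functions
and is stable under the partial derivatives along a basis. Size estimates valid for all members of
such a class automatically hold for all their derivatives. -/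
def IsDerivClosed (b : Module.Basis ι ℝ W) (S : Set (W → F)) : Prop :=
  ∀ u ∈ S, Differentiable ℝ u ∧ ∀ i, (fun x => fderiv ℝ u x (b i)) ∈ S

variable {b : Module.Basis ι ℝ W} {S : Set (W → F)} {u : W → F}

theorem exists_fderiv_eq_sum_basis [Fintype ι] (b : Module.Basis ι ℝ W) :
    ∃ L : ι → F →L[ℝ] W →L[ℝ] F, ∀ u : W → F,
      fderiv ℝ u = fun x => ∑ i, (L i ∘ fun x => fderiv ℝ u x (b i)) x := by
  have : FiniteDimensional ℝ W := b.finiteDimensional_of_finite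
  refine ⟨fun i => ContinuousLinearMap.smulRightL ℝ W F (b.coord i).toContinuousLinearMap,
    fun u => funext fun x => ContinuousLinearMap.ext fun w => ?_⟩
  conv_lhs => rw [← b.sum_repr w, map_sum]
  simp

theorem IsDerivClosed.contDiff [Finite ι] (hS : IsDerivClosed b S) (hu : u ∈ S) (n : ℕ) :
    ContDiff ℝ n u := by
  have := Fintype.ofFinite ι
  induction n generalizing u with
  | zero => exact_mod_cast contDiff_zero.2 (hS u hu).1.continuous
  | succ n ih =>
    obtain ⟨L, hL⟩ := exists_fderiv_eq_sum_basis (F := F) b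
    have hfderiv : ContDiff ℝ n (fderiv ℝ u) := by
      rw [hL u]
      exact ContDiff.sum fun i _ => (L i).contDiff.comp (ih ((hS u hu).2 i))
    exact_mod_cast contDiff_succ_iff_fderiv.2 ⟨(hS u hu).1, by simp, hfderiv⟩

theorem IsDerivClosed.exists_norm_iteratedFDeriv_succ_le [Fintype ι] (hS : IsDerivClosed b S)
    (hu : u ∈ S) (n : ℕ) : ∃ C : ι → ℝ, (∀ i, 0 ≤ C i) ∧ ∀ x, ‖iteratedFDeriv ℝ (n + 1) u x‖ ≤
      ∑ i, C i * ‖iteratedFDeriv ℝ n (fun x => fderiv ℝ u x (b i)) x‖ := by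
  obtain ⟨L, hL⟩ := exists_fderiv_eq_sum_basis (F := F) b
  have hi : ∀ i, ContDiff ℝ n fun x => fderiv ℝ u x (b i) :=
    fun i => hS.contDiff ((hS u hu).2 i) n
  refine ⟨fun i => ‖L i‖, fun i => norm_nonneg (L i), fun x => ?_⟩
  have hfderiv : iteratedFDeriv ℝ n (fderiv ℝ u) x =
      ∑ i, iteratedFDeriv ℝ n (L i ∘ fun x => fderiv ℝ u x (b i)) x := by
    conv_lhs => rw [hL u]
    exact iteratedFDeriv_fun_sum_apply fun i _ => ((L i).contDiff.comp (hi i)).contDiffAt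
  rw [← norm_iteratedFDeriv_fderiv, hfderiv]
  exact (norm_sum_le _ _).trans <| Finset.sum_le_sum fun i _ =>
    (L i).norm_iteratedFDeriv_comp_left (hi i).contDiffAt le_rfl

theorem IsDerivClosed.exists_schwartzMap_eq [Finite ι] (hS : IsDerivClosed b S)
    (hdecay : ∀ u ∈ S, ∀ k : ℕ, ∃ C : ℝ, ∀ x, ‖x‖ ^ k * ‖u x‖ ≤ C) (hu : u ∈ S) :
    ∃ s : 𝓢(W, F), ⇑s = u := by
  have := Fintype.ofFinite ι
  refine ⟨⟨u, contDiff_infty.2 (hS.contDiff hu), fun k n => ?_⟩, rfl⟩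
  induction n generalizing u with
  | zero => simpa using hdecay u hu k
  | succ n ih =>
    obtain ⟨C, hC, hle⟩ := hS.exists_norm_iteratedFDeriv_succ_le hu n
    choose K hK using fun i => ih ((hS u hu).2 i)
    refine ⟨∑ i, C i * K i, fun x => ?_⟩
    calc ‖x‖ ^ k * ‖iteratedFDeriv ℝ (n + 1) u x‖
        ≤ ‖x‖ ^ k * ∑ i, C i * ‖iteratedFDeriv ℝ n (fun x => fderiv ℝ u x (b i)) x‖ := by
          gcongr; exact hle x
      _ = ∑ i, C i * (‖x‖ ^ k * ‖iteratedFDeriv ℝ n (fun x => fderiv ℝ u x (b i)) x‖) := by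
          rw [Finset.mul_sum]
          exact Finset.sum_congr rfl fun i _ => by ring
      _ ≤ ∑ i, C i * K i :=
          Finset.sum_le_sum fun i _ => mul_le_mul_of_nonneg_left (hK i x) (hC i)

theorem IsDerivClosed.hasTemperateGrowth [Finite ι] (hS : IsDerivClosed b S)
    (hgrowth : ∀ u ∈ S, ∃ (k : ℕ) (C : ℝ), ∀ x, ‖u x‖ ≤ C * (1 + ‖x‖) ^ k) (hu : u ∈ S) :
    u.HasTemperateGrowth := by
  have := Fintype.ofFinite ι
  refine ⟨contDiff_infty.2 (hS.contDiff hu), fun n => ?_⟩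
  induction n generalizing u with
  | zero => simpa using hgrowth u hu
  | succ n ih =>
    obtain ⟨C, hC, hle⟩ := hS.exists_norm_iteratedFDeriv_succ_le hu n
    choose k K hK using fun i => ih ((hS u hu).2 i)
    refine ⟨∑ i, k i, ∑ i, C i * |K i|, fun x => (hle x).trans ?_⟩
    rw [Finset.sum_mul]
    refine Finset.sum_le_sum fun i _ => ?_
    rw [mul_assoc]
    refine mul_le_mul_of_nonneg_left ((hK i x).trans ?_) (hC i)
    gcongr
    · exact le_abs_self _
    · linarith [norm_nonneg x]
    · exact Finset.single_le_sum (f := k) (fun _ _ => Nat.zero_le _) (Finset.mem_univ i)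

end DerivClosed

section SchwartzTools

theorem exists_one_add_norm_pow_mul_norm_le {W F : Type*} [NormedAddCommGroup W] [NormedSpace ℝ W]
    [NormedAddCommGroup F] [NormedSpace ℝ F] (g : 𝓢(W, F)) (k : ℕ) :
    ∃ C : ℝ, ∀ x, (1 + ‖x‖) ^ k * ‖g x‖ ≤ C := by
  refine ⟨2 ^ k * ((Finset.Iic (k, 0)).sup fun m => SchwartzMap.seminorm ℝ m.1 m.2) g, fun x => ?_⟩
  simpa using one_add_le_sup_seminorm_apply (𝕜 := ℝ) (m := (k, 0)) le_rfl le_rfl g x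

section Slice

variable {E V F : Type*} [NormedAddCommGroup E] [NormedSpace ℝ E]
  [NormedAddCommGroup V] [NormedSpace ℝ V] [NormedAddCommGroup F] [NormedSpace ℝ F]

theorem hasTemperateGrowth_prodMk_left (x : E) : (fun v : V => (x, v)).HasTemperateGrowth := by
  simpa [Pi.add_def] using (Function.HasTemperateGrowth.const ((x, 0) : E × V)).add
    (ContinuousLinearMap.inr ℝ E V).hasTemperateGrowth

/-- The Schwartz function `v ↦ g (x, v)`. -/
def schwartzSlice (g : 𝓢(E × V, F)) (x : E) : 𝓢(V, F) :=
  SchwartzMap.compCLMOfAntilipschitz ℝ (K := 1) (g := fun v : V => (x, v))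
    (hasTemperateGrowth_prodMk_left x) (fun v w => by simp [Prod.edist_eq]) g

theorem schwartzSlice_apply (g : 𝓢(E × V, F)) (x : E) (v : V) : schwartzSlice g x v = g (x, v) :=
  rfl

end Slice

/-- The Schwartz function `g ∘ L`, where `L` is an injective linear map. -/
def schwartzPullback {W W' F : Type*} [NormedAddCommGroup W] [NormedSpace ℝ W]
    [NormedAddCommGroup W'] [NormedSpace ℝ W'] [FiniteDimensional ℝ W']
    [NormedAddCommGroup F] [NormedSpace ℝ F] (L : W' →L[ℝ] W) (hL : Function.Injective L)
    (g : 𝓢(W, F)) : 𝓢(W', F) :=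
  SchwartzMap.compCLMOfAntilipschitz ℝ L.hasTemperateGrowth
    ((L : W' →ₗ[ℝ] W).exists_antilipschitzWith (LinearMap.ker_eq_bot.2 hL)).choose_spec.2 g

section Tensor

variable {W₁ W₂ F₁ F₂ F₃ : Type*} [NormedAddCommGroup W₁] [NormedSpace ℝ W₁]
  [NormedAddCommGroup W₂] [NormedSpace ℝ W₂] [NormedAddCommGroup F₁] [NormedSpace ℝ F₁]
  [NormedAddCommGroup F₂] [NormedSpace ℝ F₂] [NormedAddCommGroup F₃] [NormedSpace ℝ F₃]

theorem hasFDerivAt_bilinear_comp_fst_snd (B : F₁ →L[ℝ] F₂ →L[ℝ] F₃) (f : 𝓢(W₁, F₁))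
    (g : 𝓢(W₂, F₂)) (p : W₁ × W₂) :
    HasFDerivAt (fun p : W₁ × W₂ => B (f p.1) (g p.2))
      (B.precompR _ (f p.1) ((fderiv ℝ g p.2).comp (ContinuousLinearMap.snd ℝ W₁ W₂)) +
        B.precompL _ ((fderiv ℝ f p.1).comp (ContinuousLinearMap.fst ℝ W₁ W₂)) (g p.2)) p :=
  B.hasFDerivAt_of_bilinear ((f.hasFDerivAt p.1).comp p hasFDerivAt_fst)
    ((g.hasFDerivAt p.2).comp p hasFDerivAt_snd)

theorem exists_norm_pow_mul_norm_bilinear_le (B : F₁ →L[ℝ] F₂ →L[ℝ] F₃) (f : 𝓢(W₁, F₁))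
    (g : 𝓢(W₂, F₂)) (k : ℕ) :
    ∃ C : ℝ, ∀ p : W₁ × W₂, ‖p‖ ^ k * ‖B (f p.1) (g p.2)‖ ≤ C := by
  obtain ⟨Cf, hf⟩ := exists_one_add_norm_pow_mul_norm_le f k
  obtain ⟨Cg, hg⟩ := exists_one_add_norm_pow_mul_norm_le g k
  refine ⟨‖B‖ * (Cf * Cg), fun p => ?_⟩
  have hp : ‖p‖ ≤ (1 + ‖p.1‖) * (1 + ‖p.2‖) := by
    rw [Prod.norm_def]
    exact max_le (by nlinarith [norm_nonneg p.1, norm_nonneg p.2])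
      (by nlinarith [norm_nonneg p.1, norm_nonneg p.2])
  calc ‖p‖ ^ k * ‖B (f p.1) (g p.2)‖
      ≤ ((1 + ‖p.1‖) * (1 + ‖p.2‖)) ^ k * (‖B‖ * ‖f p.1‖ * ‖g p.2‖) := by
        gcongr; exact B.le_opNorm₂ _ _
    _ = ‖B‖ * (((1 + ‖p.1‖) ^ k * ‖f p.1‖) * ((1 + ‖p.2‖) ^ k * ‖g p.2‖)) := by
        rw [mul_pow]; ring
    _ ≤ ‖B‖ * (Cf * Cg) := by
        have hf0 : 0 ≤ Cf := le_trans (by positivity) (hf 0)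
        gcongr
        · exact hf p.1
        · exact hg p.2

variable [FiniteDimensional ℝ W₁] [FiniteDimensional ℝ W₂]

theorem exists_schwartzMap_eq_bilinear (B : F₁ →L[ℝ] F₂ →L[ℝ] F₃) (f : 𝓢(W₁, F₁))
    (g : 𝓢(W₂, F₂)) : ∃ s : 𝓢(W₁ × W₂, F₃), ⇑s = fun p => B (f p.1) (g p.2) := by
  let S : Set (W₁ × W₂ → F₃) :=
    {u | ∃ (f : 𝓢(W₁, F₁)) (g : 𝓢(W₂, F₂)), u = fun p => B (f p.1) (g p.2)}
  have hS : IsDerivClosed ((Module.finBasis ℝ W₁).prod (Module.finBasis ℝ W₂)) S := by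
    rintro _ ⟨f, g, rfl⟩
    refine ⟨fun p => (hasFDerivAt_bilinear_comp_fst_snd B f g p).differentiableAt, ?_⟩
    have hfderiv := fun p => (hasFDerivAt_bilinear_comp_fst_snd B f g p).fderiv
    rintro (i | j)
    · refine ⟨SchwartzMap.evalCLM ℝ W₁ F₁ (Module.finBasis ℝ W₁ i)
        (SchwartzMap.fderivCLM ℝ W₁ F₁ f), g, funext fun p => ?_⟩
      simp [hfderiv]
    · refine ⟨f, SchwartzMap.evalCLM ℝ W₂ F₂ (Module.finBasis ℝ W₂ j)
        (SchwartzMap.fderivCLM ℝ W₂ F₂ g), funext fun p => ?_⟩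
      simp [hfderiv]
  refine hS.exists_schwartzMap_eq ?_ ⟨f, g, rfl⟩
  rintro _ ⟨f, g, rfl⟩ k
  exact exists_norm_pow_mul_norm_bilinear_le B f g k

/-- The tensor product `(x, y) ↦ B (f x) (g y)` of two Schwartz functions. -/
def schwartzTensor (B : F₁ →L[ℝ] F₂ →L[ℝ] F₃) (f : 𝓢(W₁, F₁)) (g : 𝓢(W₂, F₂)) :
    𝓢(W₁ × W₂, F₃) :=
  (exists_schwartzMap_eq_bilinear B f g).choose

theorem schwartzTensor_apply (B : F₁ →L[ℝ] F₂ →L[ℝ] F₃) (f : 𝓢(W₁, F₁)) (g : 𝓢(W₂, F₂))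
    (p : W₁ × W₂) : schwartzTensor B f g p = B (f p.1) (g p.2) :=
  congrFun (exists_schwartzMap_eq_bilinear B f g).choose_spec p

end Tensor

section Fubini

variable {E V F : Type*} [NormedAddCommGroup E] [NormedSpace ℝ E] [FiniteDimensional ℝ E]
  [MeasureSpace E] [BorelSpace E] [(volume : Measure E).IsAddHaarMeasure]
  [NormedAddCommGroup V] [NormedSpace ℝ V] [FiniteDimensional ℝ V]
  [MeasureSpace V] [BorelSpace V] [(volume : Measure V).IsAddHaarMeasure]
  [NormedAddCommGroup F] [NormedSpace ℝ F]

instance isAddHaarMeasure_volume_prod : (volume : Measure (E × V)).IsAddHaarMeasure :=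
  Measure.prod.instIsAddHaarMeasure _ _

instance hasTemperateGrowth_volume_prod : (volume : Measure (E × V)).HasTemperateGrowth :=
  Measure.IsAddHaarMeasure.instHasTemperateGrowth

theorem integrable_schwartz_prod (g : 𝓢(E × V, F)) : Integrable g (volume.prod volume) :=
  g.integrable (μ := (volume : Measure (E × V)))

theorem integral_schwartz_prod (g : 𝓢(E × V, F)) : ∫ p, g p = ∫ x, ∫ v, g (x, v) :=
  integral_prod _ (integrable_schwartz_prod g)

theorem integral_integral_schwartz_swap (g : 𝓢(E × V, F)) :
    ∫ x, ∫ v, g (x, v) = ∫ v, ∫ x, g (x, v) :=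
  integral_integral_swap (f := fun x v => g (x, v)) (integrable_schwartz_prod g)

end Fubini

end SchwartzTools

section PartialFourier

open scoped FourierTransform LineDeriv

variable {E V F : Type*} [NormedAddCommGroup E] [NormedSpace ℝ E]
  [NormedAddCommGroup V] [InnerProductSpace ℝ V] [NormedAddCommGroup F]

section Decay

variable [FiniteDimensional ℝ V] [MeasurableSpace V] [BorelSpace V]

theorem exists_integrable_norm_pow_mul_norm_le [NormedSpace ℝ F] (g : 𝓢(E × V, F)) (l k : ℕ) :
    ∃ w : V → ℝ, Integrable w ∧ ∀ x v, ‖x‖ ^ l * (‖v‖ ^ k * ‖g (x, v)‖) ≤ w v := by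
  obtain ⟨C, hle⟩ := exists_one_add_norm_pow_mul_norm_le g
    (l + (k + (volume : Measure V).integrablePower))
  refine ⟨fun v => C * (1 + ‖v‖) ^ (-((volume : Measure V).integrablePower : ℝ)),
    (volume : Measure V).integrable_pow_neg_integrablePower.const_mul C, fun x v => ?_⟩
  beta_reduce
  rw [Real.rpow_neg (by positivity), Real.rpow_natCast, ← div_eq_mul_inv,
    le_div_iff₀ (by positivity)]
  have hx : ‖x‖ ≤ 1 + ‖(x, v)‖ := (norm_fst_le (x, v)).trans (by linarith)
  have hv : ‖v‖ ≤ ‖(x, v)‖ := norm_snd_le (x, v)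
  calc ‖x‖ ^ l * (‖v‖ ^ k * ‖g (x, v)‖) * (1 + ‖v‖) ^ (volume : Measure V).integrablePower
      = ‖x‖ ^ l * (‖v‖ ^ k * (1 + ‖v‖) ^ (volume : Measure V).integrablePower) * ‖g (x, v)‖ := by
        ring
    _ ≤ (1 + ‖(x, v)‖) ^ l * ((1 + ‖(x, v)‖) ^ k *
          (1 + ‖(x, v)‖) ^ (volume : Measure V).integrablePower) * ‖g (x, v)‖ := by
        gcongr; linarith
    _ ≤ C := by simpa only [pow_add] using hle (x, v)

variable [NormedSpace ℂ F]

theorem fourier_schwartzSlice_apply (g : 𝓢(E × V, F)) (x : E) (ξ : V) :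
    𝓕 (schwartzSlice g x) ξ =
      ∫ v, Complex.exp (((-2 * π * ⟪v, ξ⟫_ℝ : ℝ) : ℂ) * Complex.I) • g (x, v) := by
  rw [SchwartzMap.fourier_coe, Real.fourier_eq']
  rfl

theorem fourier_schwartzSlice_lineDeriv (g : 𝓢(E × V, F)) (m : V) (x : E) (ξ : V) :
    𝓕 (schwartzSlice (∂_{((0 : E), m)} g : 𝓢(E × V, F)) x) ξ =
      (2 * π * ⟪ξ, m⟫_ℝ * Complex.I) • 𝓕 (schwartzSlice g x) ξ := by
  have hslice : schwartzSlice (∂_{((0 : E), m)} g : 𝓢(E × V, F)) x = ∂_{m} (schwartzSlice g x) := by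
    ext v
    have hfderiv : HasFDerivAt (schwartzSlice g x)
        ((fderiv ℝ g (x, v)).comp (ContinuousLinearMap.inr ℝ E V)) v :=
      (g.hasFDerivAt (x, v)).comp v (hasFDerivAt_prodMk_right x v)
    rw [schwartzSlice_apply, SchwartzMap.lineDerivOp_apply_eq_fderiv,
      SchwartzMap.lineDerivOp_apply_eq_fderiv, hfderiv.fderiv]
    rfl
  rw [hslice, SchwartzMap.fourier_lineDerivOp_eq, smul_apply, SchwartzMap.smulLeftCLM_apply_apply
    (Function.hasTemperateGrowth_inner_left m), ← Complex.coe_smul, smul_smul]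
  congr 1
  ring

theorem exists_norm_pow_mul_norm_fourier_schwartzSlice_le (g : 𝓢(E × V, F)) (l k : ℕ) :
    ∃ C : ℝ, ∀ x ξ, ‖x‖ ^ l * ‖ξ‖ ^ k * ‖𝓕 (schwartzSlice g x) ξ‖ ≤ C := by
  induction k generalizing g with
  | zero =>
    obtain ⟨w, hw, hle⟩ := exists_integrable_norm_pow_mul_norm_le g l 0
    refine ⟨∫ v, w v, fun x ξ => ?_⟩
    have hfourier : ‖𝓕 (schwartzSlice g x) ξ‖ ≤ ∫ v, ‖g (x, v)‖ :=
      VectorFourier.norm_fourierIntegral_le_integral_norm _ _ _ _ _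
    calc ‖x‖ ^ l * ‖ξ‖ ^ 0 * ‖𝓕 (schwartzSlice g x) ξ‖
        ≤ ∫ v, ‖x‖ ^ l * ‖g (x, v)‖ := by
          rw [integral_const_mul, pow_zero, mul_one]; gcongr
      _ ≤ ∫ v, w v := integral_mono (((schwartzSlice g x).integrable).norm.const_mul _) hw
          fun v => by simpa using hle x v
  | succ k ih =>
    let b := stdOrthonormalBasis ℝ V
    choose C hC using fun i => ih (∂_{((0 : E), b i)} g : 𝓢(E × V, F))
    refine ⟨∑ i, C i, fun x ξ => ?_⟩
    have hξ : ‖ξ‖ ≤ ∑ i, ‖⟪ξ, b i⟫_ℝ‖ := by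
      conv_lhs => rw [← b.sum_repr' ξ]
      refine (norm_sum_le _ _).trans_eq (Finset.sum_congr rfl fun i _ => ?_)
      rw [norm_smul, b.orthonormal.1, mul_one, real_inner_comm]
    have hπ : (1 : ℝ) ≤ 2 * π := by linarith [Real.two_le_pi]
    calc ‖x‖ ^ l * ‖ξ‖ ^ (k + 1) * ‖𝓕 (schwartzSlice g x) ξ‖
        = ‖x‖ ^ l * ‖ξ‖ ^ k * (1 * ‖ξ‖ * ‖𝓕 (schwartzSlice g x) ξ‖) := by ring
      _ ≤ ‖x‖ ^ l * ‖ξ‖ ^ k * (2 * π * (∑ i, ‖⟪ξ, b i⟫_ℝ‖) * ‖𝓕 (schwartzSlice g x) ξ‖) := by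
          gcongr
      _ = ∑ i, ‖x‖ ^ l * ‖ξ‖ ^ k *
            ‖𝓕 (schwartzSlice (∂_{((0 : E), b i)} g : 𝓢(E × V, F)) x) ξ‖ := by
          simp only [Finset.sum_mul, Finset.mul_sum, fourier_schwartzSlice_lineDeriv, norm_smul]
          refine Finset.sum_congr rfl fun i _ => ?_
          simp [abs_of_pos Real.pi_pos]
      _ ≤ ∑ i, C i := Finset.sum_le_sum fun i _ => hC i x ξ

end Decay

section Exponent

/-- The exponent `ξ ↦ -2πi⟨v, ξ⟩` of the Fourier transform. -/
def fourierExponent (v : V) : V →L[ℝ] ℂ :=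
  ((-2 * π * Complex.I) • Complex.ofRealCLM).comp (innerSL ℝ v)

theorem fourierExponent_apply (v ξ : V) :
    fourierExponent v ξ = ((-2 * π * ⟪v, ξ⟫_ℝ : ℝ) : ℂ) * Complex.I := by
  simp only [fourierExponent, neg_mul, ContinuousLinearMap.smul_comp, smul_apply,
    ContinuousLinearMap.comp_apply, coe_innerSL_apply, Complex.ofRealCLM_apply, smul_eq_mul,
    Complex.ofReal_neg, Complex.ofReal_mul, Complex.ofReal_ofNat, neg_inj]
  ring

theorem fourierExponent_comm (v ξ : V) : fourierExponent v ξ = fourierExponent ξ v := by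
  rw [fourierExponent_apply, fourierExponent_apply, real_inner_comm]

theorem norm_exp_fourierExponent (v ξ : V) : ‖Complex.exp (fourierExponent v ξ)‖ = 1 := by
  rw [fourierExponent_apply, Complex.norm_exp_ofReal_mul_I]

theorem norm_fourierExponent_le (v : V) : ‖fourierExponent v‖ ≤ 2 * π * ‖v‖ := by
  refine (ContinuousLinearMap.opNorm_comp_le _ _).trans_eq ?_
  rw [innerSL_apply_norm, norm_smul, Complex.ofRealCLM_norm]
  simp [abs_of_pos Real.pi_pos]

end Exponent

section Derivative

variable [NormedSpace ℂ F] {W : Type*} [NormedAddCommGroup W] [NormedSpace ℝ W]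

/-- The derivative of `w ↦ exp (-2πi⟨v, Q w⟩) • g (P w, v)`. -/
def fourierIntegrandDeriv (P : W →L[ℝ] E) (Q : W →L[ℝ] V) (g : 𝓢(E × V, F)) (w : W) (v : V) :
    W →L[ℝ] F :=
  Complex.exp (fourierExponent v (Q w)) •
      (fderiv ℝ g (P w, v)).comp ((ContinuousLinearMap.inl ℝ E V).comp P) +
    (Complex.exp (fourierExponent v (Q w)) • (fourierExponent v).comp Q).smulRight (g (P w, v))

variable (P : W →L[ℝ] E) (Q : W →L[ℝ] V) (g : 𝓢(E × V, F)) (w : W)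

theorem hasFDerivAt_fourierIntegrand (v : V) :
    HasFDerivAt (fun w => Complex.exp (fourierExponent v (Q w)) • g (P w, v))
      (fourierIntegrandDeriv P Q g w v) w := by
  have hpair : HasFDerivAt (fun w => (P w, v)) ((ContinuousLinearMap.inl ℝ E V).comp P) w :=
    (hasFDerivAt_prodMk_left (P w) v).comp w P.hasFDerivAt
  exact ((fourierExponent v).comp Q).hasFDerivAt.cexp.smul
    (HasFDerivAt.comp w (g.hasFDerivAt (P w, v)) hpair)

theorem norm_fourierIntegrandDeriv_le (v : V) :
    ‖fourierIntegrandDeriv P Q g w v‖ ≤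
      ‖P‖ * ‖fderiv ℝ g (P w, v)‖ + 2 * π * ‖Q‖ * (‖v‖ * ‖g (P w, v)‖) := by
  refine (norm_add_le _ _).trans (add_le_add ?_ ?_)
  · rw [norm_smul, norm_exp_fourierExponent, one_mul, mul_comm ‖P‖]
    refine (ContinuousLinearMap.opNorm_comp_le _ _).trans ?_
    gcongr
    refine (ContinuousLinearMap.opNorm_comp_le _ _).trans
      (mul_le_of_le_one_left (norm_nonneg P) ?_)
    exact ContinuousLinearMap.opNorm_le_bound _ zero_le_one fun x => by simp
  · refine ContinuousLinearMap.opNorm_le_bound _ (by positivity) fun m => ?_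
    calc ‖(Complex.exp (fourierExponent v (Q w)) • fourierExponent v (Q m)) • g (P w, v)‖
        = ‖fourierExponent v (Q m)‖ * ‖g (P w, v)‖ := by
          rw [norm_smul, norm_smul, norm_exp_fourierExponent, one_mul]
      _ ≤ 2 * π * ‖v‖ * (‖Q‖ * ‖m‖) * ‖g (P w, v)‖ := by
          gcongr
          exact ((fourierExponent v).le_of_opNorm_le (norm_fourierExponent_le v) _).trans
            (by gcongr; exact Q.le_opNorm m)
      _ = 2 * π * ‖Q‖ * (‖v‖ * ‖g (P w, v)‖) * ‖m‖ := by ring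

theorem continuous_fourierIntegrandDeriv : Continuous (fourierIntegrandDeriv P Q g w) := by
  have hpair : Continuous fun v : V => (P w, v) := by fun_prop
  have hexponent : Continuous fun v : V => fourierExponent v := by
    unfold fourierExponent; fun_prop
  have hexp : Continuous fun v : V => Complex.exp (fourierExponent v (Q w)) := by fun_prop
  have hfderiv : Continuous fun v : V => fderiv ℝ g (P w, v) :=
    (SchwartzMap.fderivCLM ℝ (E × V) F g).continuous.comp hpair
  have hsmul : Continuous fun v : V =>
      (ContinuousLinearMap.lsmul ℝ ℂ : ℂ →L[ℝ] F →L[ℝ] F).flip (g (P w, v)) :=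
    (ContinuousLinearMap.flip _).continuous.comp (g.continuous.comp hpair)
  exact (hexp.smul (hfderiv.clm_comp continuous_const)).add
    (hsmul.clm_comp (hexp.smul (hexponent.clm_comp continuous_const)))

variable [FiniteDimensional ℝ V] [MeasurableSpace V] [BorelSpace V]

theorem exists_integrable_norm_fourierIntegrandDeriv_le :
    ∃ B : V → ℝ, Integrable B ∧ ∀ w v, ‖fourierIntegrandDeriv P Q g w v‖ ≤ B v := by
  obtain ⟨w₁, hw₁, hle₁⟩ := exists_integrable_norm_pow_mul_norm_le
    (SchwartzMap.fderivCLM ℝ (E × V) F g) 0 0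
  obtain ⟨w₂, hw₂, hle₂⟩ := exists_integrable_norm_pow_mul_norm_le g 0 1
  refine ⟨fun v => ‖P‖ * w₁ v + 2 * π * ‖Q‖ * w₂ v,
    (hw₁.const_mul ‖P‖).add (hw₂.const_mul (2 * π * ‖Q‖)), fun w v => ?_⟩
  refine (norm_fourierIntegrandDeriv_le P Q g w v).trans ?_
  beta_reduce
  gcongr
  · simpa using hle₁ (P w) v
  · simpa using hle₂ (P w) v

theorem integrable_fourierIntegrandDeriv : Integrable (fourierIntegrandDeriv P Q g w) := by
  obtain ⟨B, hB, hle⟩ := exists_integrable_norm_fourierIntegrandDeriv_le P Q g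
  exact hB.mono' (continuous_fourierIntegrandDeriv P Q g w).aestronglyMeasurable
    (.of_forall (hle w))

theorem hasFDerivAt_fourier_schwartzSlice :
    HasFDerivAt (fun w => 𝓕 (schwartzSlice g (P w)) (Q w))
      (∫ v, fourierIntegrandDeriv P Q g w v) w := by
  obtain ⟨B, hB, hle⟩ := exists_integrable_norm_fourierIntegrandDeriv_le P Q g
  have hcont : ∀ w, Continuous fun v => Complex.exp (fourierExponent v (Q w)) • g (P w, v) := by
    intro w
    simp only [fourierExponent_apply]
    exact Continuous.smul (by fun_prop) (g.continuous.comp (by fun_prop))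
  simp only [fourier_schwartzSlice_apply, ← fourierExponent_apply]
  exact hasFDerivAt_integral_of_dominated_of_fderiv_le Filter.univ_mem
    (.of_forall fun w => (hcont w).aestronglyMeasurable)
    ((schwartzSlice g (P w)).integrable.mono (hcont w).aestronglyMeasurable <| .of_forall fun v =>
      (by rw [norm_smul, norm_exp_fourierExponent, one_mul, schwartzSlice_apply]))
    (continuous_fourierIntegrandDeriv P Q g w).aestronglyMeasurable
    (.of_forall fun v w _ => hle w v) hB
    (.of_forall fun v w _ => hasFDerivAt_fourierIntegrand P Q g w v)

theorem fderiv_fourier_schwartzSlice (m : W) :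
    fderiv ℝ (fun w => 𝓕 (schwartzSlice g (P w)) (Q w)) w m =
      𝓕 (schwartzSlice ((∂_{(P m, (0 : V))} g : 𝓢(E × V, F)) + SchwartzMap.smulLeftCLM F
        ((fourierExponent (Q m)).comp (ContinuousLinearMap.snd ℝ E V)) g) (P w)) (Q w) := by
  rw [(hasFDerivAt_fourier_schwartzSlice P Q g w).fderiv,
    ContinuousLinearMap.integral_apply (integrable_fourierIntegrandDeriv P Q g w),
    fourier_schwartzSlice_apply]
  refine integral_congr_ae (.of_forall fun v => ?_)
  have hmul := SchwartzMap.smulLeftCLM_apply_apply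
    ((fourierExponent (Q m)).comp (ContinuousLinearMap.snd ℝ E V)).hasTemperateGrowth g (P w, v)
  simp only [add_apply, hmul, SchwartzMap.lineDerivOp_apply_eq_fderiv, ← fourierExponent_apply]
  simp [fourierIntegrandDeriv, smul_smul, fourierExponent_comm (Q m)]

end Derivative

section Reflection

variable [NormedSpace ℝ F]

/-- The Schwartz function `(x, v) ↦ g (x, -v)`. -/
def negSnd (g : 𝓢(E × V, F)) : 𝓢(E × V, F) :=
  SchwartzMap.compCLMOfContinuousLinearEquiv ℝ
    ((ContinuousLinearEquiv.refl ℝ E).prodCongr (ContinuousLinearEquiv.neg ℝ)) g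

theorem negSnd_apply (g : 𝓢(E × V, F)) (x : E) (v : V) : negSnd g (x, v) = g (x, -v) :=
  rfl

end Reflection

section Transform

variable [FiniteDimensional ℝ E] [FiniteDimensional ℝ V] [MeasurableSpace V] [BorelSpace V]
  [NormedSpace ℂ F]

theorem exists_schwartzMap_eq_fourier_schwartzSlice (g : 𝓢(E × V, F)) :
    ∃ s : 𝓢(E × V, F), ⇑s = fun p => 𝓕 (schwartzSlice g p.1) p.2 := by
  let S : Set (E × V → F) := {u | ∃ g : 𝓢(E × V, F), u = fun p => 𝓕 (schwartzSlice g p.1) p.2}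
  have hS : IsDerivClosed (Module.finBasis ℝ (E × V)) S := by
    rintro _ ⟨g, rfl⟩
    exact ⟨fun p => (hasFDerivAt_fourier_schwartzSlice (.fst ℝ E V) (.snd ℝ E V) g
      p).differentiableAt, fun i => ⟨_, funext fun p =>
        fderiv_fourier_schwartzSlice (.fst ℝ E V) (.snd ℝ E V) g p _⟩⟩
  refine hS.exists_schwartzMap_eq ?_ ⟨g, rfl⟩
  rintro _ ⟨g, rfl⟩ k
  obtain ⟨C₁, hC₁⟩ := exists_norm_pow_mul_norm_fourier_schwartzSlice_le g k 0
  obtain ⟨C₂, hC₂⟩ := exists_norm_pow_mul_norm_fourier_schwartzSlice_le g 0 k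
  refine ⟨max C₁ C₂, fun p => ?_⟩
  rcases max_choice ‖p.1‖ ‖p.2‖ with h | h
  · rw [Prod.norm_def, h]
    exact le_max_of_le_left (by simpa using hC₁ p.1 p.2)
  · rw [Prod.norm_def, h]
    exact le_max_of_le_right (by simpa using hC₂ p.1 p.2)

/-- The Fourier transform of a Schwartz function on `E × V` in the second variable. -/
def partialFourier (g : 𝓢(E × V, F)) : 𝓢(E × V, F) :=
  (exists_schwartzMap_eq_fourier_schwartzSlice g).choose

theorem partialFourier_apply (g : 𝓢(E × V, F)) (x : E) (ξ : V) :
    partialFourier g (x, ξ) = 𝓕 (schwartzSlice g x) ξ :=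
  congrFun (exists_schwartzMap_eq_fourier_schwartzSlice g).choose_spec (x, ξ)

theorem partialFourier_apply_zero (g : 𝓢(E × V, F)) (x : E) :
    partialFourier g (x, 0) = ∫ v, g (x, v) := by
  rw [partialFourier_apply, fourier_schwartzSlice_apply]
  simp only [inner_zero_right, mul_zero, Complex.ofReal_zero, zero_mul, Complex.exp_zero, one_smul]

theorem schwartzSlice_partialFourier (g : 𝓢(E × V, F)) (x : E) :
    schwartzSlice (partialFourier g) x = 𝓕 (schwartzSlice g x) :=
  SchwartzMap.ext (partialFourier_apply g x)

/-- The inverse Fourier transform of a Schwartz function on `E × V` in the second variable. -/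
def partialFourierInv (g : 𝓢(E × V, F)) : 𝓢(E × V, F) :=
  negSnd (partialFourier g)

theorem schwartzSlice_partialFourierInv (g : 𝓢(E × V, F)) (x : E) :
    schwartzSlice (partialFourierInv g) x = 𝓕⁻ (schwartzSlice g x) := by
  ext v
  rw [schwartzSlice_apply, partialFourierInv, negSnd_apply, partialFourier_apply,
    SchwartzMap.fourier_coe, SchwartzMap.fourierInv_coe, Real.fourierInv_eq_fourier_neg]

variable [CompleteSpace F]

theorem partialFourierInv_partialFourier (g : 𝓢(E × V, F)) :
    partialFourierInv (partialFourier g) = g := by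
  ext ⟨x, v⟩
  rw [← schwartzSlice_apply, schwartzSlice_partialFourierInv, schwartzSlice_partialFourier,
    FourierTransform.fourierInv_fourier_eq, schwartzSlice_apply]

theorem partialFourier_partialFourierInv (g : 𝓢(E × V, F)) :
    partialFourier (partialFourierInv g) = g := by
  ext ⟨x, v⟩
  rw [partialFourier_apply, schwartzSlice_partialFourierInv,
    FourierTransform.fourier_fourierInv_eq, schwartzSlice_apply]

theorem integral_bilin_partialFourier_partialFourierInv {F₁ F₂ : Type*} [NormedAddCommGroup F₁]
    [NormedSpace ℂ F₁] [NormedAddCommGroup F₂] [NormedSpace ℂ F₂] (B : F₁ →L[ℂ] F →L[ℂ] F₂)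
    [CompleteSpace F₁] (a : 𝓢(E × V, F₁)) (b : 𝓢(E × V, F)) (x : E) :
    ∫ v, B (partialFourier a (x, v)) (partialFourierInv b (x, v)) =
      ∫ v, B (a (x, v)) (b (x, v)) := by
  simp only [← schwartzSlice_apply, schwartzSlice_partialFourier, schwartzSlice_partialFourierInv]
  rw [SchwartzMap.integral_bilin_fourier_eq, FourierTransform.fourier_fourierInv_eq]

theorem partialFourier_postcompCLM {F' : Type*} [NormedAddCommGroup F'] [NormedSpace ℂ F']
    [CompleteSpace F'] (L : F →L[ℂ] F') (g : 𝓢(E × V, F)) :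
    partialFourier (SchwartzMap.postcompCLM L g) =
      SchwartzMap.postcompCLM L (partialFourier g) := by
  ext ⟨x, ξ⟩
  have hint : Integrable fun v =>
      Complex.exp (((-2 * π * ⟪v, ξ⟫_ℝ : ℝ) : ℂ) * Complex.I) • g (x, v) := by
    refine ((schwartzSlice g x).integrable).mono (Continuous.aestronglyMeasurable <|
      Continuous.smul (by fun_prop) (schwartzSlice g x).continuous) (.of_forall fun v => ?_)
    rw [norm_smul, Complex.norm_exp_ofReal_mul_I, one_mul, schwartzSlice_apply]
  rw [SchwartzMap.postcompCLM_apply, partialFourier_apply, partialFourier_apply,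
    fourier_schwartzSlice_apply, fourier_schwartzSlice_apply, ← L.integral_comp_comm hint]
  simp only [SchwartzMap.postcompCLM_apply, map_smul]

end Transform

section IntegralSnd

variable [FiniteDimensional ℝ E] [FiniteDimensional ℝ V] [MeasurableSpace V] [BorelSpace V]
  [NormedSpace ℂ F]

/-- The partial integral `x ↦ ∫ v, G (x, v)` of a Schwartz function on `E × V`, which is the
restriction to zero frequency of its partial Fourier transform. -/
def schwartzIntegralSnd (G : 𝓢(E × V, F)) : 𝓢(E, F) :=
  schwartzPullback (ContinuousLinearMap.inl ℝ E V) LinearMap.inl_injective (partialFourier G)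

theorem schwartzIntegralSnd_apply (G : 𝓢(E × V, F)) (x : E) :
    schwartzIntegralSnd G x = ∫ v, G (x, v) :=
  partialFourier_apply_zero G x

end IntegralSnd

end PartialFourier

section TemperateGrowth

variable {W : Type*} [NormedAddCommGroup W] [NormedSpace ℝ W]

theorem hasTemperateGrowth_exp_neg_I_mul :
    (fun t : ℝ => Complex.exp (-Complex.I * t)).HasTemperateGrowth := by
  have hderiv (c : ℂ) (t : ℝ) : HasDerivAt (fun t : ℝ => c * Complex.exp (-Complex.I * t))
      (c * -Complex.I * Complex.exp (-Complex.I * t)) t := by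
    refine ((((Complex.ofRealCLM.hasDerivAt (x := t)).const_mul (-Complex.I)).cexp).const_mul
      c).congr_deriv ?_
    simp only [Complex.ofRealCLM_apply, Complex.ofReal_one]
    ring
  refine IsDerivClosed.hasTemperateGrowth (b := Module.Basis.singleton Unit ℝ)
    (S := {u | ∃ c : ℂ, u = fun t : ℝ => c * Complex.exp (-Complex.I * t)}) ?_ ?_
    ⟨1, by simp only [one_mul]⟩
  · rintro _ ⟨c, rfl⟩
    refine ⟨fun t => (hderiv c t).differentiableAt, fun _ => ⟨c * -Complex.I, funext fun t => ?_⟩⟩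
    rw [Module.Basis.singleton_apply, fderiv_apply_one_eq_deriv, (hderiv c t).deriv]
  · rintro _ ⟨c, rfl⟩
    refine ⟨0, ‖c‖, fun t => ?_⟩
    rw [norm_mul, neg_mul, mul_comm Complex.I, ← neg_mul, ← Complex.ofReal_neg,
      Complex.norm_exp_ofReal_mul_I, pow_zero]

section Normed

variable {F : Type*} [NormedAddCommGroup F] [NormedSpace ℝ F]

theorem hasTemperateGrowth_fderiv {h : W → F} (hh : h.HasTemperateGrowth) :
    (fderiv ℝ h).HasTemperateGrowth := by
  refine ⟨hh.1.fderiv_right (by simp), fun n => ?_⟩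
  obtain ⟨k, C, hC⟩ := hh.2 (n + 1)
  exact ⟨k, C, fun x => norm_iteratedFDeriv_fderiv.trans_le (hC x)⟩

theorem exists_norm_le_of_hasTemperateGrowth {h : W → F} (hh : h.HasTemperateGrowth) :
    ∃ (k : ℕ) (C : ℝ), 0 ≤ C ∧ ∀ x, ‖h x‖ ≤ C * (1 + ‖x‖) ^ k := by
  obtain ⟨k, C, hC⟩ := hh.2 0
  simp only [norm_iteratedFDeriv_zero] at hC
  exact ⟨k, C, by simpa using (norm_nonneg _).trans (hC 0), hC⟩

theorem exists_norm_prodMk_le_of_hasTemperateGrowth {h : ℝ × W → F} (hh : h.HasTemperateGrowth) :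
    ∃ (k : ℕ) (C : ℝ), 0 ≤ C ∧ ∀ s ∈ Set.uIoc (0 : ℝ) 1, ∀ w,
      ‖h (s, w)‖ ≤ C * (1 + ‖w‖) ^ k := by
  obtain ⟨k, C, hC0, hC⟩ := exists_norm_le_of_hasTemperateGrowth hh
  refine ⟨k, C * 2 ^ k, by positivity, fun s hs w => (hC (s, w)).trans ?_⟩
  rw [Set.uIoc_of_le zero_le_one] at hs
  have hnorm : ‖(s, w)‖ ≤ 1 + ‖w‖ := by
    refine max_le ?_ (le_add_of_nonneg_left zero_le_one)
    rw [Real.norm_of_nonneg hs.1.le]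
    linarith [hs.2, norm_nonneg w]
  rw [mul_assoc, ← mul_pow]
  gcongr
  linarith [norm_nonneg w]

end Normed

theorem hasFDerivAt_intervalIntegral_of_hasTemperateGrowth {h : ℝ × W → ℝ}
    (hh : h.HasTemperateGrowth) (w : W) :
    HasFDerivAt (fun w => ∫ s in (0 : ℝ)..1, h (s, w))
      (∫ s in (0 : ℝ)..1, (fderiv ℝ h (s, w)).comp (ContinuousLinearMap.inr ℝ ℝ W)) w := by
  have hcont : Continuous h := hh.1.continuous
  have hcont' : Continuous (fderiv ℝ h) := (hasTemperateGrowth_fderiv hh).1.continuous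
  obtain ⟨k, C, hC0, hC⟩ :=
    exists_norm_prodMk_le_of_hasTemperateGrowth (hasTemperateGrowth_fderiv hh)
  refine (intervalIntegral.hasFDerivAt_integral_of_dominated_of_fderiv_le (𝕜 := ℝ)
    (bound := fun _ => C * (2 + ‖w‖) ^ k) (Metric.ball_mem_nhds w one_pos)
    (.of_forall fun w => Continuous.aestronglyMeasurable (by fun_prop))
    (Continuous.intervalIntegrable (by fun_prop) _ _)
    (Continuous.aestronglyMeasurable (by fun_prop)) (.of_forall fun s hs w' hw' => ?_) (by simp)
    (.of_forall fun s _ w' _ => HasFDerivAt.comp w'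
      (hh.1.differentiable (by simp) (s, w')).hasFDerivAt (hasFDerivAt_prodMk_right s w')))
  have hw : ‖w'‖ ≤ 1 + ‖w‖ := by
    have := norm_sub_norm_le w' w
    rw [mem_ball_iff_norm] at hw'
    linarith
  calc ‖(fderiv ℝ h (s, w')).comp (ContinuousLinearMap.inr ℝ ℝ W)‖
      ≤ ‖fderiv ℝ h (s, w')‖ * ‖ContinuousLinearMap.inr ℝ ℝ W‖ :=
        ContinuousLinearMap.opNorm_comp_le _ _
    _ ≤ ‖fderiv ℝ h (s, w')‖ := mul_le_of_le_one_right (norm_nonneg _)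
        (ContinuousLinearMap.norm_inr_le_one ℝ ℝ W)
    _ ≤ C * (1 + ‖w'‖) ^ k := hC s hs w'
    _ ≤ C * (2 + ‖w‖) ^ k := by
        gcongr C * ?_ ^ k
        linarith

theorem fderiv_intervalIntegral_apply_of_hasTemperateGrowth {h : ℝ × W → ℝ}
    (hh : h.HasTemperateGrowth) (w v : W) :
    fderiv ℝ (fun w => ∫ s in (0 : ℝ)..1, h (s, w)) w v =
      ∫ s in (0 : ℝ)..1, fderiv ℝ h (s, w) (0, v) := by
  have hcont : Continuous (fderiv ℝ h) := (hasTemperateGrowth_fderiv hh).1.continuous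
  rw [(hasFDerivAt_intervalIntegral_of_hasTemperateGrowth hh w).fderiv,
    ContinuousLinearMap.intervalIntegral_apply (Continuous.intervalIntegrable (by fun_prop) _ _)]
  rfl

theorem hasTemperateGrowth_intervalIntegral [FiniteDimensional ℝ W] {h : ℝ × W → ℝ}
    (hh : h.HasTemperateGrowth) :
    (fun w => ∫ s in (0 : ℝ)..1, h (s, w)).HasTemperateGrowth := by
  refine IsDerivClosed.hasTemperateGrowth (b := Module.finBasis ℝ W)
    (S := {u | ∃ h : ℝ × W → ℝ, h.HasTemperateGrowth ∧ u = fun w => ∫ s in (0 : ℝ)..1, h (s, w)})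
    ?_ ?_ ⟨h, hh, rfl⟩
  · rintro _ ⟨h, hh, rfl⟩
    exact ⟨fun w => (hasFDerivAt_intervalIntegral_of_hasTemperateGrowth hh w).differentiableAt,
      fun i => ⟨fun p => fderiv ℝ h p (0, Module.finBasis ℝ W i),
        (ContinuousLinearMap.apply ℝ ℝ ((0 : ℝ), Module.finBasis ℝ W i)).hasTemperateGrowth.comp
          (hasTemperateGrowth_fderiv hh),
        funext fun w => fderiv_intervalIntegral_apply_of_hasTemperateGrowth hh w _⟩⟩
  · rintro _ ⟨h, hh, rfl⟩
    obtain ⟨k, C, -, hC⟩ := exists_norm_prodMk_le_of_hasTemperateGrowth hh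
    refine ⟨k, C, fun w => ?_⟩
    simpa using intervalIntegral.norm_integral_le_of_norm_le_const (a := 0) (b := 1)
      fun s hs => hC s hs w

end TemperateGrowth

section MagneticPhase

variable {d : ℕ} {A : Ed d → Ed d}

theorem IsPolyVF.hasTemperateGrowth (hA : IsPolyVF A) : A.HasTemperateGrowth := by
  refine ⟨hA.1, fun n => ?_⟩
  obtain ⟨C, k, hC⟩ := hA.2 n
  exact ⟨k, C, hC⟩

theorem hasTemperateGrowth_lineInt (hA : IsPolyVF A) :
    (fun w : Ed d × Ed d => lineInt A w.1 w.2).HasTemperateGrowth := by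
  have hs : (fun p : ℝ × (Ed d × Ed d) => p.1).HasTemperateGrowth :=
    (ContinuousLinearMap.fst ℝ ℝ (Ed d × Ed d)).hasTemperateGrowth
  have hx : (fun p : ℝ × (Ed d × Ed d) => p.2.1).HasTemperateGrowth :=
    ((ContinuousLinearMap.fst ℝ (Ed d) (Ed d)).comp
      (ContinuousLinearMap.snd ℝ ℝ (Ed d × Ed d))).hasTemperateGrowth
  have hy : (fun p : ℝ × (Ed d × Ed d) => p.2.2).HasTemperateGrowth :=
    ((ContinuousLinearMap.snd ℝ (Ed d) (Ed d)).comp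
      (ContinuousLinearMap.snd ℝ ℝ (Ed d × Ed d))).hasTemperateGrowth
  exact hasTemperateGrowth_intervalIntegral <|
    ContinuousLinearMap.bilinear_hasTemperateGrowth (𝕜 := ℝ) (innerSL ℝ)
      (hA.hasTemperateGrowth.comp (hx.add (hs.smul (hy.sub hx)))) (hy.sub hx)

theorem lineInt_self (A : Ed d → Ed d) (x : Ed d) : lineInt A x x = 0 := by
  simp [lineInt]

theorem lineInt_swap (A : Ed d → Ed d) (x y : Ed d) : lineInt A y x = -lineInt A x y := by
  have hreverse := intervalIntegral.integral_comp_sub_left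
    (fun s => ⟪A (y + s • (x - y)), x - y⟫_ℝ) (a := 0) (b := 1) 1
  rw [sub_zero, sub_self] at hreverse
  rw [lineInt, lineInt, ← hreverse, ← intervalIntegral.integral_neg]
  refine intervalIntegral.integral_congr fun s _ => ?_
  have hpoint : y + (1 - s) • (x - y) = x + s • (y - x) := by module
  simp only [hpoint, ← inner_neg_right, neg_sub]

/-- The phases `θ (x, y)` by which a Weyl quantization may be twisted: functions of temperate growth
with `θ (x, y) * θ (y, x) = 1` and `θ (x, x) = 1`. -/
structure IsWeylPhase {V : Type*} [NormedAddCommGroup V] [NormedSpace ℝ V] (θ : V × V → ℂ) :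
    Prop where
  hasTemperateGrowth : θ.HasTemperateGrowth
  mul_swap (x y : V) : θ (x, y) * θ (y, x) = 1
  self (x : V) : θ (x, x) = 1

/-- The phase `(x, y) ↦ e^{-i(λ/ε)Γ_A(εx, εy)}` of the magnetic Weyl quantization. -/
def magneticPhase (ε lam : ℝ) (A : Ed d → Ed d) (p : Ed d × Ed d) : ℂ :=
  Complex.exp (-Complex.I * (((lam / ε) * lineInt A (ε • p.1) (ε • p.2) : ℝ) : ℂ))

theorem isWeylPhase_magneticPhase (ε lam : ℝ) (hA : IsPolyVF A) :
    IsWeylPhase (magneticPhase ε lam A) where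
  hasTemperateGrowth := by
    have hline := (hasTemperateGrowth_lineInt hA).comp
      (ε • ContinuousLinearMap.id ℝ (Ed d × Ed d)).hasTemperateGrowth
    have hphase : (fun p : Ed d × Ed d =>
        lam / ε * lineInt A (ε • p.1) (ε • p.2)).HasTemperateGrowth :=
      (Function.HasTemperateGrowth.const (lam / ε)).mul hline
    exact hasTemperateGrowth_exp_neg_I_mul.comp hphase
  mul_swap x y := by
    rw [magneticPhase, magneticPhase, ← Complex.exp_add, lineInt_swap A (ε • x), ← mul_add,
      ← Complex.ofReal_add, mul_neg, add_neg_cancel, Complex.ofReal_zero, mul_zero,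
      Complex.exp_zero]
  self x := by
    rw [magneticPhase, lineInt_self, mul_zero, Complex.ofReal_zero, mul_zero, Complex.exp_zero]

end MagneticPhase

section IntegralKernels

variable {V : Type*} [NormedAddCommGroup V] [InnerProductSpace ℝ V] [FiniteDimensional ℝ V]

section Composition

variable {F₁ F₂ F₃ : Type*} [NormedAddCommGroup F₁] [NormedSpace ℂ F₁]
  [NormedAddCommGroup F₂] [NormedSpace ℂ F₂] [NormedAddCommGroup F₃] [NormedSpace ℂ F₃]

/-- The integrand `((x, z), y) ↦ B (K (x, y)) (L (y, z))` of the composition of two Schwartz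
kernels. -/
def kernelCompIntegrand (B : F₁ →L[ℂ] F₂ →L[ℂ] F₃) (K : 𝓢(V × V, F₁)) (L : 𝓢(V × V, F₂)) :
    𝓢((V × V) × V, F₃) :=
  let x : (V × V) × V →L[ℝ] V := (ContinuousLinearMap.fst ℝ V V).comp (.fst ℝ (V × V) V)
  let z : (V × V) × V →L[ℝ] V := (ContinuousLinearMap.snd ℝ V V).comp (.fst ℝ (V × V) V)
  let y : (V × V) × V →L[ℝ] V := ContinuousLinearMap.snd ℝ (V × V) V
  schwartzPullback ((x.prod y).prod (y.prod z))
    (fun p q h => by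
      simp only [ContinuousLinearMap.prod_apply, Prod.mk.injEq] at h
      exact Prod.ext (Prod.ext h.1.1 h.2.2) h.1.2)
    (schwartzTensor (B.bilinearRestrictScalars ℝ) K L)

theorem kernelCompIntegrand_apply (B : F₁ →L[ℂ] F₂ →L[ℂ] F₃) (K : 𝓢(V × V, F₁))
    (L : 𝓢(V × V, F₂)) (x y z : V) :
    kernelCompIntegrand B K L ((x, z), y) = B (K (x, y)) (L (y, z)) :=
  schwartzTensor_apply _ _ _ _

variable [MeasurableSpace V] [BorelSpace V]

theorem integrable_kernelComp (B : F₁ →L[ℂ] F₂ →L[ℂ] F₃) (K : 𝓢(V × V, F₁)) (L : 𝓢(V × V, F₂))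
    (x z : V) : Integrable fun y => B (K (x, y)) (L (y, z)) := by
  refine (schwartzSlice (kernelCompIntegrand B K L) (x, z)).integrable.congr
    (.of_forall fun y => ?_)
  beta_reduce
  rw [schwartzSlice_apply, kernelCompIntegrand_apply]

/-- The composition `(x, z) ↦ ∫ y, B (K (x, y)) (L (y, z))` of two Schwartz kernels whose values are
multiplied by means of `B`. -/
def kernelComp (B : F₁ →L[ℂ] F₂ →L[ℂ] F₃) (K : 𝓢(V × V, F₁)) (L : 𝓢(V × V, F₂)) : 𝓢(V × V, F₃) :=
  schwartzIntegralSnd (kernelCompIntegrand B K L)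

theorem kernelComp_apply (B : F₁ →L[ℂ] F₂ →L[ℂ] F₃) (K : 𝓢(V × V, F₁)) (L : 𝓢(V × V, F₂))
    (x z : V) : kernelComp B K L (x, z) = ∫ y, B (K (x, y)) (L (y, z)) := by
  simp only [kernelComp, schwartzIntegralSnd_apply, kernelCompIntegrand_apply]

theorem kernelComp_postcompCLM {G₂ G₃ : Type*} [NormedAddCommGroup G₂] [NormedSpace ℂ G₂]
    [NormedAddCommGroup G₃] [NormedSpace ℂ G₃] [CompleteSpace F₃] [CompleteSpace G₃]
    {B : F₁ →L[ℂ] F₂ →L[ℂ] F₃} {B' : F₁ →L[ℂ] G₂ →L[ℂ] G₃} {S : F₂ →L[ℂ] G₂} {T : F₃ →L[ℂ] G₃}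
    (hST : ∀ u v, B' u (S v) = T (B u v)) (K : 𝓢(V × V, F₁)) (L : 𝓢(V × V, F₂)) :
    kernelComp B' K (SchwartzMap.postcompCLM S L) =
      SchwartzMap.postcompCLM T (kernelComp B K L) := by
  ext ⟨x, z⟩
  simp only [kernelComp_apply, SchwartzMap.postcompCLM_apply, hST]
  exact T.integral_comp_comm (integrable_kernelComp B K L x z)

end Composition

section Operators

variable {H H' H'' : Type*} [NormedAddCommGroup H] [NormedSpace ℂ H] [NormedAddCommGroup H']
  [NormedSpace ℂ H'] [NormedAddCommGroup H''] [NormedSpace ℂ H'']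

/-- The Schwartz function `(x, y) ↦ K (x, y) (Ψ y)`. -/
def kernelApply (K : 𝓢(V × V, H →L[ℂ] H')) (Ψ : 𝓢(V, H)) : 𝓢(V × V, H') :=
  schwartzPullback ((ContinuousLinearMap.id ℝ (V × V)).prod (.snd ℝ V V))
    (fun _ _ h => congrArg Prod.fst h)
    (schwartzTensor ((ContinuousLinearMap.id ℂ (H →L[ℂ] H')).bilinearRestrictScalars ℝ) K Ψ)

theorem kernelApply_apply (K : 𝓢(V × V, H →L[ℂ] H')) (Ψ : 𝓢(V, H)) (x y : V) :
    kernelApply K Ψ (x, y) = K (x, y) (Ψ y) :=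
  schwartzTensor_apply _ _ _ _

variable [MeasurableSpace V] [BorelSpace V]

theorem integrable_kernelApply (K : 𝓢(V × V, H →L[ℂ] H')) (Ψ : 𝓢(V, H)) (x : V) :
    Integrable fun y => K (x, y) (Ψ y) := by
  refine (schwartzSlice (kernelApply K Ψ) x).integrable.congr (.of_forall fun y => ?_)
  beta_reduce
  rw [schwartzSlice_apply, kernelApply_apply]

/-- The integral operator `Ψ ↦ ∫ y, K (·, y) (Ψ y)` with operator-valued kernel `K`. -/
def integralOperator (K : V × V → H →L[ℂ] H') (Ψ : V → H) (x : V) : H' :=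
  ∫ y, K (x, y) (Ψ y)

theorem integralOperator_kernelComp [CompleteSpace H'] [CompleteSpace H'']
    (K : 𝓢(V × V, H' →L[ℂ] H'')) (L : 𝓢(V × V, H →L[ℂ] H')) (Ψ : 𝓢(V, H)) :
    integralOperator (kernelComp (ContinuousLinearMap.compL ℂ H H' H'') K L) Ψ =
      integralOperator K (integralOperator L Ψ) := by
  ext x
  obtain ⟨G, hG⟩ : ∃ G : 𝓢(V × V, H''), ∀ u y, G (u, y) = K (x, u) (L (u, y) (Ψ y)) :=
    ⟨schwartzPullback ((ContinuousLinearMap.fst ℝ V V).prod (.id ℝ (V × V)))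
      (fun _ _ h => congrArg Prod.snd h)
      (schwartzTensor ((ContinuousLinearMap.id ℂ (H' →L[ℂ] H'')).bilinearRestrictScalars ℝ)
        (schwartzSlice K x) (kernelApply L Ψ)),
      fun u y => (schwartzTensor_apply _ _ _ _).trans (congrArg _ (kernelApply_apply L Ψ u y))⟩
  calc integralOperator (kernelComp (ContinuousLinearMap.compL ℂ H H' H'') K L) Ψ x
      = ∫ y, ∫ u, K (x, u) (L (u, y) (Ψ y)) := by
        refine integral_congr_ae (.of_forall fun y => ?_)
        beta_reduce
        rw [kernelComp_apply, ContinuousLinearMap.integral_apply (integrable_kernelComp _ K L x y)]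
        rfl
    _ = ∫ u, ∫ y, K (x, u) (L (u, y) (Ψ y)) := by
        simpa only [hG] using (integral_integral_schwartz_swap G).symm
    _ = integralOperator K (integralOperator L Ψ) x := by
        refine integral_congr_ae (.of_forall fun u => ?_)
        exact (K (x, u)).integral_comp_comm (integrable_kernelApply L Ψ u)

open scoped ContDiff in
theorem integralOperator_injective [CompleteSpace H'] {K L : 𝓢(V × V, H →L[ℂ] H')}
    (h : ∀ Ψ : 𝓢(V, H), integralOperator K Ψ = integralOperator L Ψ) : K = L := by
  ext ⟨x, y⟩ e
  have hcont (M : 𝓢(V × V, H →L[ℂ] H')) : Continuous fun y => M (x, y) e :=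
    (schwartzSlice M x).continuous.clm_apply continuous_const
  suffices hae : (fun y => K (x, y) e) =ᵐ[volume] fun y => L (x, y) e from
    congrFun ((hcont K).ae_eq_iff_eq volume (hcont L) |>.1 hae) y
  refine ae_eq_of_integral_contDiff_smul_eq (hcont K).locallyIntegrable
    (hcont L).locallyIntegrable fun φ hφ hφc => ?_
  have hsupp : HasCompactSupport fun y => (φ y : ℂ) :=
    hφc.comp_left (g := fun t : ℝ => (t : ℂ)) Complex.ofReal_zero
  have hsmooth : ContDiff ℝ ∞ fun y => (φ y : ℂ) := Complex.ofRealCLM.contDiff.comp hφ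
  have htest := congrFun (h (SchwartzMap.postcompCLM (ContinuousLinearMap.toSpanSingleton ℂ e)
    (hsupp.toSchwartzMap hsmooth))) x
  simpa [integralOperator] using htest

end Operators

end IntegralKernels

section WeylKernels

open scoped FourierTransform

variable {V : Type*} [NormedAddCommGroup V] [InnerProductSpace ℝ V] {ε : ℝ}

/-- The coordinates `((ε / 2) (x + y), (y - x) / 2π)` in which the kernel of a Weyl operator is the
partial Fourier transform of its symbol. -/
def weylCoord (hε : ε ≠ 0) : (V × V) ≃L[ℝ] V × V :=
  ContinuousLinearEquiv.equivOfInverse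
    (((ε / 2) • (ContinuousLinearMap.fst ℝ V V + .snd ℝ V V)).prod
      ((2 * π)⁻¹ • (ContinuousLinearMap.snd ℝ V V - .fst ℝ V V)))
    ((ε⁻¹ • ContinuousLinearMap.fst ℝ V V - π • .snd ℝ V V).prod
      (ε⁻¹ • ContinuousLinearMap.fst ℝ V V + π • .snd ℝ V V))
    (fun ⟨x, y⟩ => by
      change (ε⁻¹ • (ε / 2) • (x + y) - π • (2 * π)⁻¹ • (y - x),
        ε⁻¹ • (ε / 2) • (x + y) + π • (2 * π)⁻¹ • (y - x)) = (x, y)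
      have hε2 : ε⁻¹ * (ε / 2) = 2⁻¹ := by field_simp
      have hπ2 : π * (2 * π)⁻¹ = 2⁻¹ := by field_simp
      rw [smul_smul, smul_smul, hε2, hπ2]
      congr 1 <;> module)
    (fun ⟨u, v⟩ => by
      change ((ε / 2) • ((ε⁻¹ • u - π • v) + (ε⁻¹ • u + π • v)),
        (2 * π)⁻¹ • ((ε⁻¹ • u + π • v) - (ε⁻¹ • u - π • v))) = (u, v)
      rw [sub_add_add_cancel, add_sub_sub_cancel, ← two_smul ℝ (ε⁻¹ • u), ← two_smul ℝ (π • v),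
        smul_smul (ε / 2), div_mul_cancel₀ _ two_ne_zero, smul_inv_smul₀ hε, smul_smul 2 π,
        inv_smul_smul₀ (by positivity)])

theorem weylCoord_apply (hε : ε ≠ 0) (x y : V) :
    weylCoord hε (x, y) = ((ε / 2) • (x + y), (2 * π)⁻¹ • (y - x)) :=
  rfl

variable [FiniteDimensional ℝ V] [MeasurableSpace V] [BorelSpace V]

theorem integral_integral_weylCoord {F : Type*} [NormedAddCommGroup F] [NormedSpace ℝ F]
    (hε : ε ≠ 0) (G : 𝓢(V × V, F)) :
    ∫ x, ∫ y, G (weylCoord hε (x, y)) =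
      |(ε ^ Module.finrank ℝ V)⁻¹| • |(2 * π) ^ Module.finrank ℝ V| • ∫ p, G p := by
  let shear : (V × V) →L[ℝ] V × V :=
    (ContinuousLinearMap.fst ℝ V V).prod (.fst ℝ V V + .snd ℝ V V)
  have hinj : Function.Injective shear := by
    rintro ⟨x, z⟩ ⟨x', z'⟩ h
    obtain ⟨rfl, hz⟩ : x = x' ∧ x + z = x' + z' := Prod.mk.inj h
    rw [add_left_cancel hz]
  have hshear : Function.Injective ((weylCoord hε).toContinuousLinearMap.comp shear) :=
    (weylCoord hε).injective.comp hinj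
  have hmidpoint (x z : V) : weylCoord hε (x, x + z) =
      (ε • (x + (2 : ℝ)⁻¹ • z), (2 * π)⁻¹ • z) := by
    rw [weylCoord_apply, add_sub_cancel_left]
    congr 1
    module
  have htranslate (x : V) :
      ∫ y, G (weylCoord hε (x, y)) = ∫ z, G (weylCoord hε (x, x + z)) :=
    (integral_add_left_eq_self (fun y => G (weylCoord hε (x, y))) x).symm
  have hscale (z : V) : ∫ x, G (weylCoord hε (x, x + z)) =
      |(ε ^ Module.finrank ℝ V)⁻¹| • ∫ x, G (x, (2 * π)⁻¹ • z) := by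
    simp only [hmidpoint]
    rw [integral_add_right_eq_self (fun x => G (ε • x, (2 * π)⁻¹ • z)),
      Measure.integral_comp_smul volume (fun x => G (x, (2 * π)⁻¹ • z))]
  calc ∫ x, ∫ y, G (weylCoord hε (x, y))
      = ∫ x, ∫ z, G (weylCoord hε (x, x + z)) := by
        simp only [htranslate]
    _ = ∫ z, ∫ x, G (weylCoord hε (x, x + z)) :=
        integral_integral_schwartz_swap (schwartzPullback _ hshear G)
    _ = ∫ z, |(ε ^ Module.finrank ℝ V)⁻¹| • ∫ x, G (x, (2 * π)⁻¹ • z) := by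
        simp only [hscale]
    _ = |(ε ^ Module.finrank ℝ V)⁻¹| • |(2 * π) ^ Module.finrank ℝ V| • ∫ z, ∫ x, G (x, z) := by
        rw [integral_smul, Measure.integral_comp_inv_smul volume (fun z => ∫ x, G (x, z))]
    _ = |(ε ^ Module.finrank ℝ V)⁻¹| • |(2 * π) ^ Module.finrank ℝ V| • ∫ p, G p := by
        rw [integral_schwartz_prod, integral_integral_schwartz_swap]

section Symbols

variable {F : Type*} [NormedAddCommGroup F] [NormedSpace ℂ F] {θ : V × V → ℂ}

/-- The integral kernel `(2π)⁻ⁿ θ(x, y) ∫ e^{-i⟨y - x, η⟩} s((ε / 2)(x + y), η) dη` of the Weyl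
quantization of the symbol `s`, twisted by the phase `θ`. -/
def weylKernel (hε : ε ≠ 0) (θ : V × V → ℂ) (s : 𝓢(V × V, F)) : 𝓢(V × V, F) :=
  ((2 * π) ^ Module.finrank ℝ V)⁻¹ • SchwartzMap.smulLeftCLM F θ
    (SchwartzMap.compCLMOfContinuousLinearEquiv ℂ (weylCoord hε) (partialFourier s))

theorem weylKernel_apply (hε : ε ≠ 0) (hθ : θ.HasTemperateGrowth) (s : 𝓢(V × V, F))
    (p : V × V) : weylKernel hε θ s p =
      ((2 * π) ^ Module.finrank ℝ V)⁻¹ • θ p • partialFourier s (weylCoord hε p) := by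
  simp only [weylKernel, smul_apply, SchwartzMap.smulLeftCLM_apply_apply hθ,
    SchwartzMap.compCLMOfContinuousLinearEquiv_apply, Function.comp_apply]

variable [CompleteSpace F]

/-- The symbol of the operator with integral kernel `K`, which inverts `weylKernel`. -/
def weylSymbol (hε : ε ≠ 0) (θ : V × V → ℂ) (K : 𝓢(V × V, F)) : 𝓢(V × V, F) :=
  partialFourierInv ((2 * π) ^ Module.finrank ℝ V •
    SchwartzMap.compCLMOfContinuousLinearEquiv ℂ (weylCoord hε).symm
      (SchwartzMap.smulLeftCLM F (fun p => θ p.swap) K))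

theorem partialFourier_weylSymbol (hε : ε ≠ 0) (hθ : θ.HasTemperateGrowth) (K : 𝓢(V × V, F))
    (p : V × V) : partialFourier (weylSymbol hε θ K) (weylCoord hε p) =
      (2 * π) ^ Module.finrank ℝ V • θ p.swap • K p := by
  have hswap : (fun p : V × V => θ p.swap).HasTemperateGrowth :=
    hθ.comp (ContinuousLinearEquiv.prodComm ℝ V V : V × V →L[ℝ] V × V).hasTemperateGrowth
  rw [weylSymbol, partialFourier_partialFourierInv]
  simp only [smul_apply, SchwartzMap.compCLMOfContinuousLinearEquiv_apply, Function.comp_apply,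
    ContinuousLinearEquiv.symm_apply_apply, SchwartzMap.smulLeftCLM_apply_apply hswap]

theorem weylKernel_weylSymbol (hε : ε ≠ 0) (hθ : IsWeylPhase θ) (K : 𝓢(V × V, F)) :
    weylKernel hε θ (weylSymbol hε θ K) = K := by
  ext ⟨x, y⟩
  rw [weylKernel_apply hε hθ.hasTemperateGrowth, partialFourier_weylSymbol hε hθ.hasTemperateGrowth,
    smul_comm (θ (x, y)), inv_smul_smul₀ (by positivity), smul_smul, Prod.swap_prod_mk,
    hθ.mul_swap, one_smul]

theorem weylSymbol_weylKernel (hε : ε ≠ 0) (hθ : IsWeylPhase θ) (s : 𝓢(V × V, F)) :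
    weylSymbol hε θ (weylKernel hε θ s) = s := by
  suffices h : partialFourier (weylSymbol hε θ (weylKernel hε θ s)) = partialFourier s by
    rw [← partialFourierInv_partialFourier (weylSymbol hε θ (weylKernel hε θ s)), h,
      partialFourierInv_partialFourier]
  ext q
  obtain ⟨⟨x, y⟩, rfl⟩ := (weylCoord hε).surjective q
  rw [partialFourier_weylSymbol hε hθ.hasTemperateGrowth, weylKernel_apply hε hθ.hasTemperateGrowth,
    smul_comm (θ _), smul_inv_smul₀ (by positivity), smul_smul, Prod.swap_prod_mk,
    hθ.mul_swap, one_smul]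

theorem weylKernel_injective (hε : ε ≠ 0) (hθ : IsWeylPhase θ) :
    Function.Injective (weylKernel hε θ : 𝓢(V × V, F) → 𝓢(V × V, F)) :=
  Function.LeftInverse.injective (weylSymbol_weylKernel hε hθ)

theorem weylKernel_postcompCLM {F' : Type*} [NormedAddCommGroup F'] [NormedSpace ℂ F']
    [CompleteSpace F'] (hε : ε ≠ 0) (hθ : θ.HasTemperateGrowth) (L : F →L[ℂ] F')
    (s : 𝓢(V × V, F)) : weylKernel hε θ (SchwartzMap.postcompCLM L s) =
      SchwartzMap.postcompCLM L (weylKernel hε θ s) := by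
  ext p
  simp only [weylKernel_apply hε hθ, partialFourier_postcompCLM, SchwartzMap.postcompCLM_apply,
    map_smul, ContinuousLinearMap.map_smul_of_tower]

end Symbols

section Diagonal

variable {F : Type*} [NormedAddCommGroup F] [NormedSpace ℂ F] {θ : V × V → ℂ}

theorem integral_weylKernel_diag (hε : ε ≠ 0) (hθ : IsWeylPhase θ) (s : 𝓢(V × V, F)) :
    ∫ x, weylKernel hε θ s (x, x) =
      ((2 * π) ^ Module.finrank ℝ V)⁻¹ • |(ε ^ Module.finrank ℝ V)⁻¹| • ∫ p, s p := by
  have hdiag (x : V) : weylKernel hε θ s (x, x) =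
      ((2 * π) ^ Module.finrank ℝ V)⁻¹ • ∫ η, s (ε • x, η) := by
    have hcoord : weylCoord hε (x, x) = (ε • x, 0) := by
      rw [weylCoord_apply, sub_self, smul_zero, ← two_smul ℝ x, smul_smul,
        div_mul_cancel₀ _ two_ne_zero]
    rw [weylKernel_apply hε hθ.hasTemperateGrowth, hθ.self, one_smul, hcoord,
      partialFourier_apply_zero]
  simp only [hdiag]
  rw [integral_smul, Measure.integral_comp_smul volume (fun x => ∫ η, s (x, η)),
    integral_schwartz_prod]

variable {F₁ F₂ : Type*} [NormedAddCommGroup F₁] [NormedSpace ℂ F₁]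
  [NormedAddCommGroup F₂] [NormedSpace ℂ F₂]

theorem apply_weylKernel_weylKernel_swap (hε : ε ≠ 0) (hθ : IsWeylPhase θ)
    (B : F₁ →L[ℂ] F₂ →L[ℂ] F) (a : 𝓢(V × V, F₁)) (b : 𝓢(V × V, F₂)) (x y : V) :
    B (weylKernel hε θ a (x, y)) (weylKernel hε θ b (y, x)) =
      ((2 * π) ^ Module.finrank ℝ V)⁻¹ • ((2 * π) ^ Module.finrank ℝ V)⁻¹ •
        SchwartzMap.pairing B (partialFourier a) (partialFourierInv b) (weylCoord hε (x, y)) := by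
  have hreflect : partialFourier b (weylCoord hε (y, x)) =
      partialFourierInv b (weylCoord hε (x, y)) := by
    rw [weylCoord_apply, weylCoord_apply, partialFourierInv, negSnd_apply, ← smul_neg, neg_sub,
      add_comm y]
  rw [weylKernel_apply hε hθ.hasTemperateGrowth, weylKernel_apply hε hθ.hasTemperateGrowth,
    hreflect, SchwartzMap.pairing_apply_apply]
  simp only [map_smul, ContinuousLinearMap.map_smul_of_tower, smul_apply]
  rw [smul_comm (θ (x, y)), smul_smul (θ _) (θ _), mul_comm, hθ.mul_swap, one_smul]

variable [CompleteSpace F₁] [CompleteSpace F₂]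

/-- On the diagonal the phases of the two factors cancel and the integral becomes the Plancherel
pairing of the symbols. -/
theorem integral_kernelComp_weylKernel_diag (hε : ε ≠ 0) (hθ : IsWeylPhase θ)
    (B : F₁ →L[ℂ] F₂ →L[ℂ] F) (a : 𝓢(V × V, F₁)) (b : 𝓢(V × V, F₂)) :
    ∫ x, kernelComp B (weylKernel hε θ a) (weylKernel hε θ b) (x, x) =
      ((2 * π) ^ Module.finrank ℝ V)⁻¹ • |(ε ^ Module.finrank ℝ V)⁻¹| •
        ∫ p, B (a p) (b p) := by
  set G := SchwartzMap.pairing B (partialFourier a) (partialFourierInv b) with hG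
  have hpairing : ∫ p, G p = ∫ p, B (a p) (b p) :=
    calc ∫ p, G p = ∫ x, ∫ v, G (x, v) := integral_schwartz_prod G
      _ = ∫ x, ∫ v, B (a (x, v)) (b (x, v)) := by
        simp only [hG, SchwartzMap.pairing_apply_apply,
          integral_bilin_partialFourier_partialFourierInv]
      _ = ∫ p, B (a p) (b p) := (integral_schwartz_prod (SchwartzMap.pairing B a b)).symm
  simp only [kernelComp_apply, apply_weylKernel_weylKernel_swap hε hθ, integral_smul]
  rw [← hG, integral_integral_weylCoord, hpairing, abs_of_pos (a := (2 * π) ^ _) (by positivity),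
    smul_comm |_|, inv_smul_smul₀ (by positivity)]

end Diagonal

section Product

variable {F F₁ F₂ : Type*} [NormedAddCommGroup F] [NormedSpace ℂ F] [CompleteSpace F]
  [NormedAddCommGroup F₁] [NormedSpace ℂ F₁] [NormedAddCommGroup F₂] [NormedSpace ℂ F₂]
  {θ : V × V → ℂ}

/-- The Weyl product of two vector-valued symbols whose values are multiplied by means of `B`: the
symbol whose Weyl kernel is the composition of the kernels of the factors. -/
def weylProduct (hε : ε ≠ 0) (θ : V × V → ℂ) (B : F₁ →L[ℂ] F₂ →L[ℂ] F) (a : 𝓢(V × V, F₁))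
    (b : 𝓢(V × V, F₂)) : 𝓢(V × V, F) :=
  weylSymbol hε θ (kernelComp B (weylKernel hε θ a) (weylKernel hε θ b))

theorem weylKernel_weylProduct (hε : ε ≠ 0) (hθ : IsWeylPhase θ) (B : F₁ →L[ℂ] F₂ →L[ℂ] F)
    (a : 𝓢(V × V, F₁)) (b : 𝓢(V × V, F₂)) : weylKernel hε θ (weylProduct hε θ B a b) =
      kernelComp B (weylKernel hε θ a) (weylKernel hε θ b) :=
  weylKernel_weylSymbol hε hθ _

variable [CompleteSpace F₂]

theorem postcompCLM_weylProduct {G G₂ : Type*} [NormedAddCommGroup G] [NormedSpace ℂ G]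
    [CompleteSpace G] [NormedAddCommGroup G₂] [NormedSpace ℂ G₂] [CompleteSpace G₂] (hε : ε ≠ 0)
    (hθ : IsWeylPhase θ) {B : F₁ →L[ℂ] F₂ →L[ℂ] F} {B' : F₁ →L[ℂ] G₂ →L[ℂ] G} {S : F₂ →L[ℂ] G₂}
    {T : F →L[ℂ] G} (hST : ∀ u v, B' u (S v) = T (B u v)) (a : 𝓢(V × V, F₁)) (b : 𝓢(V × V, F₂)) :
    SchwartzMap.postcompCLM T (weylProduct hε θ B a b) =
      weylProduct hε θ B' a (SchwartzMap.postcompCLM S b) := by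
  apply weylKernel_injective hε hθ
  rw [weylKernel_postcompCLM hε hθ.hasTemperateGrowth, weylKernel_weylProduct hε hθ,
    weylKernel_weylProduct hε hθ, weylKernel_postcompCLM hε hθ.hasTemperateGrowth,
    kernelComp_postcompCLM hST]

theorem integral_weylProduct [CompleteSpace F₁] (hε : ε ≠ 0) (hθ : IsWeylPhase θ)
    (B : F₁ →L[ℂ] F₂ →L[ℂ] F) (a : 𝓢(V × V, F₁)) (b : 𝓢(V × V, F₂)) :
    ∫ p, weylProduct hε θ B a b p = ∫ p, B (a p) (b p) := by
  have hdiag := integral_weylKernel_diag hε hθ (weylProduct hε θ B a b)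
  rw [weylKernel_weylProduct hε hθ, integral_kernelComp_weylKernel_diag hε hθ] at hdiag
  have hπ : ((2 * π) ^ Module.finrank ℝ V)⁻¹ ≠ 0 := by positivity
  have hε' : |(ε ^ Module.finrank ℝ V)⁻¹| ≠ 0 := by positivity
  exact (smul_right_injective F hε' (smul_right_injective F hπ hdiag)).symm

end Product

end WeylKernels

section NormingEmbeddings

variable {E F W : Type*} [NormedAddCommGroup E] [NormedSpace ℂ E] [NormedAddCommGroup F]
  [NormedSpace ℂ F] [NormedAddCommGroup W] [NormedSpace ℝ W]

/-- A continuous linear map `j : E → F` is norming if the norm of every `x : E` is the supremum of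
`‖ψ (j x)‖` over the functionals `ψ` on `F` for which `ψ ∘ j` has norm at most one. Mean value
inequalities for functions into `E` can then be checked after composition with `j`. -/
def IsNorming (j : E →L[ℂ] F) : Prop :=
  ∀ (x : E) (C : ℝ), 0 ≤ C →
    (∀ ψ : StrongDual ℂ F, ‖ψ.comp j‖ ≤ 1 → ‖ψ (j x)‖ ≤ C) → ‖x‖ ≤ C

variable {j : E →L[ℂ] F} {u : W → E} {u' : W → W →L[ℝ] E}

theorem IsNorming.norm_image_sub_sub_le (hj : IsNorming j) {φ : W →L[ℝ] E} {s : Set W} {C : ℝ}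
    (hu : ∀ z ∈ s, HasFDerivAt (fun z => j (u z)) ((j.restrictScalars ℝ).comp (u' z)) z)
    (hC : ∀ z ∈ s, ‖u' z - φ‖ ≤ C) (hs : Convex ℝ s) {x y : W} (hx : x ∈ s) (hy : y ∈ s) :
    ‖u y - u x - φ (y - x)‖ ≤ C * ‖y - x‖ := by
  have hC0 : 0 ≤ C := (norm_nonneg _).trans (hC x hx)
  refine hj _ _ (by positivity) fun ψ hψ => ?_
  let Λ : E →L[ℝ] ℂ := (ψ.comp j).restrictScalars ℝ
  have hderiv (z : W) (hz : z ∈ s) : HasFDerivWithinAt (fun z => Λ (u z)) (Λ.comp (u' z)) s z :=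
    ((ψ.restrictScalars ℝ).hasFDerivAt.comp z (hu z hz)).hasFDerivWithinAt
  have hbound (z : W) (hz : z ∈ s) : ‖Λ.comp (u' z) - Λ.comp φ‖ ≤ C := by
    rw [← ContinuousLinearMap.comp_sub]
    calc ‖Λ.comp (u' z - φ)‖ ≤ ‖Λ‖ * ‖u' z - φ‖ := ContinuousLinearMap.opNorm_comp_le _ _
      _ ≤ 1 * C := mul_le_mul hψ (hC z hz) (norm_nonneg _) zero_le_one
      _ = C := one_mul C
  have hmvt := hs.norm_image_sub_le_of_norm_hasFDerivWithin_le' hderiv hbound hx hy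
  rwa [ContinuousLinearMap.comp_apply, ← map_sub, ← map_sub] at hmvt

theorem IsNorming.continuous_of_norm_le (hj : IsNorming j) {C : ℝ}
    (hu : ∀ z, HasFDerivAt (fun z => j (u z)) ((j.restrictScalars ℝ).comp (u' z)) z)
    (hC : ∀ z, ‖u' z‖ ≤ C) : Continuous u := by
  refine (LipschitzWith.of_dist_le' fun y x => ?_ : LipschitzWith C.toNNReal u).continuous
  have h := hj.norm_image_sub_sub_le (φ := 0) (fun z _ => hu z) (fun z _ => by simpa using hC z)
    convex_univ (Set.mem_univ x) (Set.mem_univ y)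
  simpa [dist_eq_norm] using h

theorem IsNorming.hasFDerivAt (hj : IsNorming j) {x : W}
    (hu : ∀ z, HasFDerivAt (fun z => j (u z)) ((j.restrictScalars ℝ).comp (u' z)) z)
    (hu' : ContinuousAt u' x) : HasFDerivAt u (u' x) x := by
  refine HasFDerivAt.of_isLittleO (Asymptotics.isLittleO_iff.2 fun c hc => ?_)
  obtain ⟨δ, hδ, hclose⟩ := Metric.continuousAt_iff.1 hu' c hc
  filter_upwards [Metric.ball_mem_nhds x hδ] with y hy
  refine hj.norm_image_sub_sub_le (fun z _ => hu z) (fun z hz => ?_) (convex_ball x δ)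
    (Metric.mem_ball_self hδ) hy
  rw [← dist_eq_norm]
  exact (hclose hz).le

variable {ι : Type*} [Finite ι] {b : Module.Basis ι ℝ W} {S : Set (W → E)}

/-- Boundedness of the first weak derivatives makes the members of `S` Lipschitz continuous, so the
weak derivatives are themselves continuous and hence genuine derivatives. -/
theorem IsNorming.isDerivClosed (hj : IsNorming j)
    (hS : ∀ u ∈ S, Differentiable ℝ (fun x => j (u x)) ∧
      ∀ i, ∃ w ∈ S, ∀ x, fderiv ℝ (fun x => j (u x)) x (b i) = j (w x))
    (hbdd : ∀ u ∈ S, ∃ C, ∀ x, ‖u x‖ ≤ C) : IsDerivClosed b S := by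
  have := Fintype.ofFinite ι
  have : FiniteDimensional ℝ W := b.finiteDimensional_of_finite
  have hweak (u : W → E) (hu : u ∈ S) : ∃ w : ι → W → E, (∀ i, w i ∈ S) ∧
      ∀ x, HasFDerivAt (fun x => j (u x))
        ((j.restrictScalars ℝ).comp (b.constrL fun i => w i x)) x := by
    choose w hwS hw using (hS u hu).2
    refine ⟨w, hwS, fun x => ((hS u hu).1 x).hasFDerivAt.congr_fderiv ?_⟩
    refine ContinuousLinearMap.coe_injective (b.ext fun i => ?_)
    change fderiv ℝ (fun x => j (u x)) x (b i) = j (b.constrL (fun i => w i x) (b i))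
    rw [b.constrL_basis, hw]
  have hcont (u : W → E) (hu : u ∈ S) : Continuous u := by
    obtain ⟨w, hwS, hw⟩ := hweak u hu
    choose C hC using fun i => hbdd (w i) (hwS i)
    obtain ⟨K, -, hK⟩ := b.exists_opNorm_le (F := E)
    refine hj.continuous_of_norm_le hw fun x => hK (M := ∑ i, |C i|) (by positivity) fun i => ?_
    rw [b.constrL_basis]
    exact ((hC i x).trans (le_abs_self _)).trans
      (Finset.single_le_sum (f := fun i => |C i|) (fun _ _ => abs_nonneg _) (Finset.mem_univ i))
  intro u hu
  obtain ⟨w, hwS, hw⟩ := hweak u hu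
  have hw_cont : Continuous fun x => b.constrL fun i => w i x := by
    refine continuous_clm_apply.2 fun v => ?_
    simp only [b.constrL_apply]
    exact continuous_finsetSum _ fun i _ => (hcont _ (hwS i)).const_smul _
  have hderiv (x : W) := hj.hasFDerivAt hw hw_cont.continuousAt (x := x)
  refine ⟨fun x => (hderiv x).differentiableAt, fun i => ?_⟩
  convert hwS i using 1
  ext x
  rw [(hderiv x).fderiv, b.constrL_basis]

end NormingEmbeddings

section TraceClassSchwartz

open scoped LineDeriv

theorem lineDerivOp_lineDerivOp_comm {W F : Type*} [NormedAddCommGroup W] [NormedSpace ℝ W]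
    [NormedAddCommGroup F] [NormedSpace ℝ F] (v w : W) (f : 𝓢(W, F)) :
    (∂_{v} (∂_{w} f : 𝓢(W, F)) : 𝓢(W, F)) = ∂_{w} (∂_{v} f : 𝓢(W, F)) := by
  have hsecond (v w : W) (x : W) :
      (∂_{v} (∂_{w} f : 𝓢(W, F)) : 𝓢(W, F)) x = iteratedFDeriv ℝ 2 f x ![v, w] :=
    SchwartzMap.iteratedLineDerivOp_eq_iteratedFDeriv (m := ![v, w])
  ext x
  have hsymm : IsSymmSndFDerivAt ℝ f x :=
    (f.smooth 2).contDiffAt.isSymmSndFDerivAt minSmoothness_of_isRCLikeNormedField.le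
  rw [hsecond, hsecond, iteratedFDeriv_two_apply, iteratedFDeriv_two_apply]
  exact hsymm v w

theorem lineDerivOp_postcompCLM {W F F' : Type*} [NormedAddCommGroup W] [NormedSpace ℝ W]
    [NormedAddCommGroup F] [NormedSpace ℂ F] [NormedAddCommGroup F'] [NormedSpace ℂ F']
    (L : F →L[ℂ] F') (f : 𝓢(W, F)) (v : W) :
    (∂_{v} (SchwartzMap.postcompCLM L f) : 𝓢(W, F')) =
      SchwartzMap.postcompCLM L (∂_{v} f : 𝓢(W, F)) := by
  ext x
  rw [SchwartzMap.postcompCLM_apply, SchwartzMap.lineDerivOp_apply_eq_fderiv,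
    SchwartzMap.lineDerivOp_apply_eq_fderiv]
  have hderiv : HasFDerivAt (SchwartzMap.postcompCLM L f)
      ((L.restrictScalars ℝ).comp (fderiv ℝ f x)) x :=
    (L.restrictScalars ℝ).hasFDerivAt.comp x f.differentiableAt.hasFDerivAt
  rw [hderiv.fderiv]
  rfl

variable {d : ℕ}

theorem mDeriv_coe_eq_foldr_lineDerivOp {F : Type*} [NormedAddCommGroup F] [NormedSpace ℝ F]
    (a α : List (Fin d)) (f : 𝓢(Ed d × Ed d, F)) :
    mDeriv a α f = ⇑((mkDirs a α).foldr (fun v (s : 𝓢(Ed d × Ed d, F)) => ∂_{v} s) f) := by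
  rw [mDeriv]
  induction mkDirs a α with
  | nil => rfl
  | cons v l ih =>
    ext p
    rw [List.foldr_cons, List.foldr_cons, ih, SchwartzMap.lineDerivOp_apply_eq_fderiv, dirD]

theorem mDeriv_lineDerivOp {F : Type*} [NormedAddCommGroup F] [NormedSpace ℝ F]
    {a α a' α' : List (Fin d)} {v : Ed d × Ed d} (h : (mkDirs a α ++ [v]).Perm (mkDirs a' α'))
    (f : 𝓢(Ed d × Ed d, F)) : mDeriv a α (∂_{v} f : 𝓢(Ed d × Ed d, F)) = mDeriv a' α' f := by
  rw [mDeriv_coe_eq_foldr_lineDerivOp, mDeriv_coe_eq_foldr_lineDerivOp,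
    ← h.foldr_eq' fun v _ w _ s => lineDerivOp_lineDerivOp_comm w v s, List.foldr_append]
  rfl

/-- The standard basis of phase space, made of the position and momentum directions of `mkDirs`. -/
def phaseSpaceBasis (d : ℕ) : Module.Basis (Fin d ⊕ Fin d) ℝ (Ed d × Ed d) :=
  (EuclideanSpace.basisFun (Fin d) ℝ).toBasis.prod (EuclideanSpace.basisFun (Fin d) ℝ).toBasis

theorem exists_perm_mkDirs (i : Fin d ⊕ Fin d) (a α : List (Fin d)) :
    ∃ a' α', (mkDirs a α ++ [phaseSpaceBasis d i]).Perm (mkDirs a' α') := by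
  rcases i with i | i
  · refine ⟨i :: a, α, List.perm_append_comm.trans (.of_eq ?_)⟩
    simp [mkDirs, phaseSpaceBasis]
  · refine ⟨a, α ++ [i], .of_eq ?_⟩
    simp [mkDirs, phaseSpaceBasis]

variable {H H' : Type*} [NormedAddCommGroup H] [InnerProductSpace ℂ H]
  [NormedAddCommGroup H'] [InnerProductSpace ℂ H']

theorem TCSchwartz.lineDerivOp {f : 𝓢(Ed d × Ed d, H →L[ℂ] H')} (hf : TCSchwartz f)
    (i : Fin d ⊕ Fin d) :
    TCSchwartz (∂_{phaseSpaceBasis d i} f : 𝓢(Ed d × Ed d, H →L[ℂ] H')) := by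
  have hdecay (k : ℕ) (a α : List (Fin d)) : ∃ C : ℝ, ∀ X : Ed d × Ed d,
      ENNReal.ofReal ((1 + ‖X‖) ^ k) * traceNormE (mDeriv a α
        ⇑(∂_{phaseSpaceBasis d i} f : 𝓢(Ed d × Ed d, H →L[ℂ] H')) X) ≤ ENNReal.ofReal C := by
    obtain ⟨a', α', hperm⟩ := exists_perm_mkDirs i a α
    rw [mDeriv_lineDerivOp hperm]
    exact hf.2 k a' α'
  obtain ⟨C, hC⟩ := hdecay 0 [] []
  refine ⟨fun X => lt_of_le_of_lt ?_ (ENNReal.ofReal_lt_top (r := C)), hdecay⟩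
  have hX := hC X
  rw [pow_zero, ENNReal.ofReal_one, one_mul] at hX
  exact hX

namespace TraceClass

theorem isNorming_toCLM : IsNorming (toCLM (H := H) (H' := H')) := by
  intro T C hC hψ
  refine norm_le_of_norm_sum_inner_le hC fun n e v he hv => ?_
  let ψ : StrongDual ℂ (H →L[ℂ] H') :=
    ∑ i, (innerSL ℂ (v i)).comp (ContinuousLinearMap.apply ℂ H' (e i))
  have hψ_apply (S : H →L[ℂ] H') : ψ S = ∑ i, ⟪v i, S (e i)⟫_ℂ := by
    simp [ψ, sum_apply]
  have hψ_norm : ‖ψ.comp toCLM‖ ≤ 1 := by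
    refine ContinuousLinearMap.opNorm_le_bound _ zero_le_one fun S => ?_
    rw [one_mul, ContinuousLinearMap.comp_apply, hψ_apply]
    exact (norm_sum_le _ _).trans (sum_norm_inner_le S he hv)
  simpa only [hψ_apply, toCLM_apply] using hψ ψ hψ_norm

end TraceClass

open TraceClass

theorem TCSchwartz.exists_norm_pow_mul_norm_le {f : 𝓢(Ed d × Ed d, H →L[ℂ] H')}
    (hf : TCSchwartz f) {u : Ed d × Ed d → TraceClass H H'} (hu : ∀ X, toCLM (u X) = f X)
    (k : ℕ) : ∃ C : ℝ, ∀ X, ‖X‖ ^ k * ‖u X‖ ≤ C := by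
  obtain ⟨C, hC⟩ := hf.2 k [] []
  refine ⟨max C 0, fun X => ?_⟩
  have hX : ENNReal.ofReal ((1 + ‖X‖) ^ k * ‖u X‖) ≤ ENNReal.ofReal (max C 0) := by
    rw [ENNReal.ofReal_mul (by positivity), TraceClass.ofReal_norm, ← toCLM_apply, hu]
    exact (hC X).trans (ENNReal.ofReal_le_ofReal (le_max_left C 0))
  refine le_trans ?_ ((ENNReal.ofReal_le_ofReal_iff (le_max_right C 0)).1 hX)
  gcongr
  exact le_add_of_nonneg_left zero_le_one

theorem TCSchwartz.exists_postcompCLM_toCLM_eq {f : 𝓢(Ed d × Ed d, H →L[ℂ] H')}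
    (hf : TCSchwartz f) :
    ∃ g : 𝓢(Ed d × Ed d, TraceClass H H'), SchwartzMap.postcompCLM toCLM g = f := by
  let S : Set (Ed d × Ed d → TraceClass H H') :=
    {u | ∃ s : 𝓢(Ed d × Ed d, H →L[ℂ] H'), TCSchwartz s ∧ ∀ X, toCLM (u X) = s X}
  have hdecay (u) (hu : u ∈ S) (k : ℕ) : ∃ C : ℝ, ∀ X, ‖X‖ ^ k * ‖u X‖ ≤ C := by
    obtain ⟨s, hs, hus⟩ := hu
    exact hs.exists_norm_pow_mul_norm_le hus k
  have hS : IsDerivClosed (phaseSpaceBasis d) S := by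
    refine isNorming_toCLM.isDerivClosed ?_ fun u hu => by simpa using hdecay u hu 0
    rintro u ⟨s, hs, hus⟩
    rw [funext hus]
    refine ⟨s.differentiable, fun i => ?_⟩
    have hs' := hs.lineDerivOp i
    exact ⟨fun X => ⟨_, hs'.1 X⟩, ⟨_, hs', fun X => rfl⟩,
      fun X => (SchwartzMap.lineDerivOp_apply_eq_fderiv _ s X).symm⟩
  obtain ⟨g, hg⟩ := hS.exists_schwartzMap_eq hdecay
    (u := fun X => ⟨f X, hf.1 X⟩) ⟨f, hf, fun _ => rfl⟩
  refine ⟨g, SchwartzMap.ext fun X => ?_⟩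
  rw [SchwartzMap.postcompCLM_apply, hg, toCLM_apply]

theorem tcSchwartz_postcompCLM_toCLM (g : 𝓢(Ed d × Ed d, TraceClass H H')) :
    TCSchwartz (SchwartzMap.postcompCLM toCLM g) := by
  have hfoldr (l : List (Ed d × Ed d)) :
      l.foldr (fun v (s : 𝓢(Ed d × Ed d, H →L[ℂ] H')) => ∂_{v} s)
        (SchwartzMap.postcompCLM toCLM g) =
      SchwartzMap.postcompCLM toCLM
        (l.foldr (fun v (s : 𝓢(Ed d × Ed d, TraceClass H H')) => ∂_{v} s) g) := by
    induction l with
    | nil => rfl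
    | cons v l ih => rw [List.foldr_cons, ih, lineDerivOp_postcompCLM, List.foldr_cons]
  refine ⟨fun X => (g X).isTraceClass, fun k a α => ?_⟩
  obtain ⟨C, hC⟩ := exists_one_add_norm_pow_mul_norm_le
    ((mkDirs a α).foldr (fun v (s : 𝓢(Ed d × Ed d, TraceClass H H')) => ∂_{v} s) g) k
  refine ⟨C, fun X => ?_⟩
  rw [mDeriv_coe_eq_foldr_lineDerivOp, hfoldr, SchwartzMap.postcompCLM_apply, toCLM_apply,
    ← TraceClass.ofReal_norm, ← ENNReal.ofReal_mul (by positivity)]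
  exact ENNReal.ofReal_le_ofReal (hC X)

end TraceClassSchwartz

section MagneticWeylProduct

variable {d : ℕ} {H H' : Type*} {ε lam : ℝ} {A : Ed d → Ed d}

section Quantization

variable [NormedAddCommGroup H] [NormedSpace ℂ H] [NormedAddCommGroup H'] [NormedSpace ℂ H']

theorem wPhase_eq_mul_magneticPhase (ε lam : ℝ) (A : Ed d → Ed d) (x y η : Ed d) :
    wPhase ε lam A x y η =
      magneticPhase ε lam A (x, y) * Complex.exp (-Complex.I * ((⟪y - x, η⟫_ℝ : ℝ) : ℂ)) :=
  mul_comm _ _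

variable [CompleteSpace H']

theorem partialFourier_weylCoord_apply (hε : ε ≠ 0) (s : 𝓢(Ed d × Ed d, H →L[ℂ] H'))
    (x y : Ed d) (e : H) :
    partialFourier s (weylCoord hε (x, y)) e =
      ∫ η, Complex.exp (-Complex.I * ((⟪y - x, η⟫_ℝ : ℝ) : ℂ)) • s ((ε / 2) • (x + y), η) e := by
  have heval : partialFourier s (weylCoord hε (x, y)) e =
      partialFourier (SchwartzMap.postcompCLM (ContinuousLinearMap.apply ℂ H' e) s)
        (weylCoord hε (x, y)) := by
    rw [partialFourier_postcompCLM]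
    rfl
  rw [heval, weylCoord_apply, partialFourier_apply, fourier_schwartzSlice_apply]
  refine integral_congr_ae (.of_forall fun η => ?_)
  have hexponent : -2 * π * ⟪η, (2 * π)⁻¹ • (y - x)⟫_ℝ = -⟪y - x, η⟫_ℝ := by
    rw [real_inner_smul_right, real_inner_comm]
    field_simp
  beta_reduce
  rw [hexponent, Complex.ofReal_neg, neg_mul, mul_comm, ← neg_mul]
  rfl

theorem opA_eq_integralOperator_weylKernel (hε : ε ≠ 0) (hA : IsPolyVF A)
    (s : 𝓢(Ed d × Ed d, H →L[ℂ] H')) (Ψ : Ed d → H) :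
    opA ε lam A s Ψ = integralOperator (weylKernel hε (magneticPhase ε lam A) s) Ψ := by
  have hθ := (isWeylPhase_magneticPhase ε lam hA).hasTemperateGrowth
  ext x
  rw [opA, integralOperator, ← integral_smul]
  refine integral_congr_ae (.of_forall fun y => ?_)
  simp only [weylKernel_apply hε hθ, finrank_euclideanSpace_fin, smul_apply,
    partialFourier_weylCoord_apply, wPhase_eq_mul_magneticPhase, mul_smul, integral_smul]

theorem eq_weylProduct_of_opA_eq {H'' : Type*} [NormedAddCommGroup H''] [NormedSpace ℂ H'']
    [CompleteSpace H''] (hε : ε ≠ 0) (hA : IsPolyVF A) {q : 𝓢(Ed d × Ed d, H →L[ℂ] H'')}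
    {a : 𝓢(Ed d × Ed d, H' →L[ℂ] H'')} {b : 𝓢(Ed d × Ed d, H →L[ℂ] H')}
    (hq : ∀ (Ψ : 𝓢(Ed d, H)) (x : Ed d),
      opA ε lam A q Ψ x = opA ε lam A a (opA ε lam A b Ψ) x) :
    q = weylProduct hε (magneticPhase ε lam A) (ContinuousLinearMap.compL ℂ H H' H'') a b := by
  have hθ := isWeylPhase_magneticPhase ε lam hA
  apply weylKernel_injective hε hθ
  rw [weylKernel_weylProduct hε hθ]
  refine integralOperator_injective fun Ψ => ?_
  rw [integralOperator_kernelComp]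
  simp only [← opA_eq_integralOperator_weylKernel hε hA]
  exact funext (hq Ψ)

end Quantization

variable [NormedAddCommGroup H] [InnerProductSpace ℂ H] [CompleteSpace H]
  [NormedAddCommGroup H'] [InnerProductSpace ℂ H'] [CompleteSpace H']

theorem TraceClass.integrable_trH {α : Type*} [MeasurableSpace α] {μ : Measure α}
    {T : α → TraceClass H H} (hT : Integrable T μ) :
    Integrable (fun x => trH (toCLM (T x))) μ := by
  simp only [← trace_apply]
  exact trace.integrable_comp hT

theorem TraceClass.integral_trH {α : Type*} [MeasurableSpace α] {μ : Measure α}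
    {T : α → TraceClass H H} (hT : Integrable T μ) :
    ∫ x, trH (toCLM (T x)) ∂μ = trH (toCLM (∫ x, T x ∂μ)) := by
  simp only [← trace_apply]
  exact trace.integral_comp_comm hT

theorem postcompCLM_toCLM_weylProduct_eq (hε : ε ≠ 0) (hA : IsPolyVF A)
    {a : 𝓢(Ed d × Ed d, H' →L[ℂ] H)} {g : 𝓢(Ed d × Ed d, TraceClass H H')}
    {q : 𝓢(Ed d × Ed d, H →L[ℂ] H)}
    (hq : ∀ (Ψ : 𝓢(Ed d, H)) (x : Ed d), opA ε lam A q Ψ x =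
      opA ε lam A a (opA ε lam A (SchwartzMap.postcompCLM TraceClass.toCLM g) Ψ) x) :
    SchwartzMap.postcompCLM TraceClass.toCLM
      (weylProduct hε (magneticPhase ε lam A) TraceClass.compL a g) = q := by
  rw [eq_weylProduct_of_opA_eq hε hA hq]
  exact postcompCLM_weylProduct hε (isWeylPhase_magneticPhase ε lam hA)
    (fun u v => (TraceClass.toCLM_compL u v).symm) a g

/-- The pointwise adjoint `f*` of an operator-valued Schwartz function `f`. -/
def schwartzAdjoint (f : 𝓢(Ed d × Ed d, H →L[ℂ] H')) : 𝓢(Ed d × Ed d, H' →L[ℂ] H) :=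
  SchwartzMap.postcompCLM (AddMonoidHom.toRealLinearMap
    (ContinuousLinearMap.adjoint : (H →L[ℂ] H') ≃ₗᵢ⋆[ℂ] H' →L[ℂ] H)
    ContinuousLinearMap.adjoint.continuous) f

theorem statement_6_general (hε : ε ≠ 0) (hA : IsPolyVF A)
    (a : 𝓢(Ed d × Ed d, H' →L[ℂ] H)) {g : 𝓢(Ed d × Ed d, H →L[ℂ] H')} (hg : TCSchwartz g)
    {q : 𝓢(Ed d × Ed d, H →L[ℂ] H)}
    (hq : ∀ (Ψ : 𝓢(Ed d, H)) (x : Ed d),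
      opA ε lam A q Ψ x = opA ε lam A a (opA ε lam A g Ψ) x) :
    TCSchwartz q ∧ Integrable (fun X => trH (q X)) ∧
      Integrable (fun X => trH ((a X).comp (g X))) ∧
      ∫ X, trH (q X) = ∫ X, trH ((a X).comp (g X)) := by
  obtain ⟨g, rfl⟩ := hg.exists_postcompCLM_toCLM_eq
  obtain ⟨q, hq_integral, rfl⟩ : ∃ r : 𝓢(Ed d × Ed d, TraceClass H H),
      ∫ X, r X = ∫ X, SchwartzMap.pairing TraceClass.compL a g X ∧
        SchwartzMap.postcompCLM TraceClass.toCLM r = q :=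
    ⟨_, integral_weylProduct hε (isWeylPhase_magneticPhase ε lam hA) TraceClass.compL a g,
      postcompCLM_toCLM_weylProduct_eq hε hA hq⟩
  simp only [SchwartzMap.postcompCLM_apply, ← TraceClass.toCLM_compL,
    ← SchwartzMap.pairing_apply_apply]
  have hpairing := (SchwartzMap.pairing TraceClass.compL a g).integrable (μ := volume)
  refine ⟨tcSchwartz_postcompCLM_toCLM q, TraceClass.integrable_trH q.integrable,
    TraceClass.integrable_trH hpairing, ?_⟩
  rw [TraceClass.integral_trH q.integrable, hq_integral, TraceClass.integral_trH hpairing]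

end MagneticWeylProduct

theorem statement_6 {d : ℕ} (ε lam : ℝ) (hε : 0 < ε) (hlam : 0 < lam)
    {H H' : Type*}
    [NormedAddCommGroup H] [InnerProductSpace ℂ H] [CompleteSpace H]
    [TopologicalSpace.SeparableSpace H]
    [NormedAddCommGroup H'] [InnerProductSpace ℂ H'] [CompleteSpace H']
    [TopologicalSpace.SeparableSpace H']
    (A : Ed d → Ed d) (hA : IsPolyVF A)
    (f g : SchwartzMap (Ed d × Ed d) (H →L[ℂ] H'))
    (hf : TCSchwartz f) (hg : TCSchwartz g)
    -- `q` is the magnetic Weyl product `f* ♯ g`, characterized through the quantization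
    (q : SchwartzMap (Ed d × Ed d) (H →L[ℂ] H))
    (hq : ∀ (Ψ : SchwartzMap (Ed d) H) (x : Ed d),
      opA ε lam A (⇑q) (⇑Ψ) x =
        opA ε lam A (fun X => ContinuousLinearMap.adjoint (f X)) (opA ε lam A (⇑g) (⇑Ψ)) x) :
    TCSchwartz q ∧
    Integrable (fun X : Ed d × Ed d => trH (q X)) volume ∧
    Integrable
      (fun X : Ed d × Ed d => trH ((ContinuousLinearMap.adjoint (f X)).comp (g X))) volume ∧
    ∫ X : Ed d × Ed d, trH (q X) =
      ∫ X : Ed d × Ed d, trH ((ContinuousLinearMap.adjoint (f X)).comp (g X)) := by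
  exact statement_6_general hε.ne' hA (schwartzAdjoint f) hg hq

end
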